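/- Let W = (𝒫,[n]) be an admissible Wilson loop diagram with k propagators. Then in ℝ[x] the principal ideal generated by R(V(𝒫)) equals the radical of the principal ideal generated by the product ∏_{a=1}^{n} Δ_{I_a}(x) of the Grassmann necklace minors of M_{V(𝒫)}. -/

import Mathlib

/-- `b` lies strictly inside the cyclic interval going (in the increasing cyclic direction)
from `a` to `c` in `ZMod n`. -/
def Inside {n : ℕ} (a b c : ZMod n) : Prop :=
  0 < (b - a).val ∧ (b - a).val < (c - a).val

/-- Two propagators (given as ordered pairs representing unordered pairs) cross:
exactly one endpoint of `q` lies strictly inside each of the two cyclic intervals into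
which the endpoints of `p` divide `ZMod n`. -/
def Cross {n : ℕ} (p q : ZMod n × ZMod n) : Prop :=
  (Inside p.1 q.1 p.2 ∧ Inside p.2 q.2 p.1) ∨
    (Inside p.1 q.2 p.2 ∧ Inside p.2 q.1 p.1)

/-- The support `V_p = {i, i+1, j, j+1}` of a propagator `p = (i,j)`. -/
def propSupp {n : ℕ} (p : ZMod n × ZMod n) : Finset (ZMod n) :=
  {p.1, p.1 + 1, p.2, p.2 + 1}

/-- The support `V_P` of a multiset of propagators. -/
def multiSupp {n : ℕ} (P : Multiset (ZMod n × ZMod n)) : Finset (ZMod n) :=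
  (P.map propSupp).sup

/-- A Wilson loop diagram `(Ps, [n])` is admissible: no two propagators cross,
every nonempty subset `P` of the propagators satisfies `|V_P| ≥ |P| + 3`
(local density), and `n ≥ |Ps| + 4` (global density). -/
def Admissible (n : ℕ) (Ps : Multiset (ZMod n × ZMod n)) : Prop :=
  (∀ p ∈ Ps, ∀ q ∈ Ps, ¬ Cross p q) ∧
  (∀ P : Multiset (ZMod n × ZMod n), P ≤ Ps → P ≠ 0 →
    Multiset.card P + 3 ≤ (multiSupp P).card) ∧
  Multiset.card Ps + 4 ≤ n


open MvPolynomial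

/-- The polynomial ring `ℝ[x_{p,v}]` with variables indexed by propagator rows and
vertices of the diagram. -/
abbrev WR (k n : ℕ) : Type := MvPolynomial (Fin k × ZMod n) ℝ

/-- Its field of fractions `K`. -/
abbrev WF (k n : ℕ) : Type := FractionRing (WR k n)

/-- The matrix `M_{V(𝒫)}` of a Wilson loop diagram, with entries in `ℝ[x]`:
the `(p,v)` entry is `x_{p,v}` if `v ∈ V_p` and `0` otherwise. -/
noncomputable def MWpoly (k n : ℕ) (P : Fin k → ZMod n × ZMod n) :
    Matrix (Fin k) (ZMod n) (WR k n) :=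
  Matrix.of fun i v => if v ∈ propSupp (P i) then X (i, v) else 0

/-- The matrix `M_{V(𝒫)}` of a Wilson loop diagram, over the field `K`. -/
noncomputable def MW (k n : ℕ) (P : Fin k → ZMod n × ZMod n) :
    Matrix (Fin k) (ZMod n) (WF k n) :=
  Matrix.of fun i v => algebraMap (WR k n) (WF k n) (MWpoly k n P i v)

/-- The minor `Δ_S(x) ∈ ℝ[x]` of `M_{V(𝒫)}` on a `k`-element set `S` of columns
(and `0` if `S` does not have `k` elements).  It is well defined up to the sign
coming from the chosen enumeration of `S`. -/
noncomputable def minorW (k n : ℕ) (P : Fin k → ZMod n × ZMod n)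
    (S : Finset (ZMod n)) : WR k n :=
  if h : S.card = k then
    ((MWpoly k n P).submatrix id
      (fun i : Fin k => ((S.equivFin.symm (Fin.cast h.symm i)) : ZMod n))).det
  else 0

/-- The position of `x` in the cyclic order `<ₐ` starting at `a`. -/
def keyW {n : ℕ} (a x : ZMod n) : ℕ := (x - a).val

/-- The Gale order `≤ₐ` associated to the cyclic shift `<ₐ`:  `S ≤ₐ T` iff the
sorted lists of positions agree in length and are pointwise `≤`. -/
def GaleLEat {n : ℕ} (a : ZMod n) (S T : Finset (ZMod n)) : Prop :=
  List.Forall₂ (· ≤ ·)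
    ((S.image (keyW a)).sort (· ≤ ·)) ((T.image (keyW a)).sort (· ≤ ·))

/-- `S` is a basis of columns of `M_{V(𝒫)}`: it has `k` elements and its maximal
minor is nonzero. -/
def IsBasisW (k n : ℕ) (P : Fin k → ZMod n × ZMod n) (S : Finset (ZMod n)) : Prop :=
  S.card = k ∧ minorW k n P S ≠ 0

/-- `S` is the Grassmann necklace element `I_a`: the `≤ₐ`-least basis. -/
def NecklaceAt (k n : ℕ) (P : Fin k → ZMod n × ZMod n) (a : ZMod n)
    (S : Finset (ZMod n)) : Prop :=
  IsBasisW k n P S ∧ ∀ T : Finset (ZMod n), IsBasisW k n P T → GaleLEat a S T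

/-- `p` is incident to the edge `e`. -/
def IncidentE {n : ℕ} (p : ZMod n × ZMod n) (e : ZMod n) : Prop :=
  p.1 = e ∨ p.2 = e

/-- The endpoint of `p` other than `e`. -/
def otherEnd {n : ℕ} (p : ZMod n × ZMod n) (e : ZMod n) : ZMod n :=
  if p.1 = e then p.2 else p.1

/-- `q : Fin s → Fin k` enumerates the propagators incident to the edge `e`,
ordered by proximity to the vertex `e`, i.e. so that the other endpoints
`j_1, …, j_s` satisfy `j_s <_{e+1} ⋯ <_{e+1} j_1`. -/
def EnumIncident {k n : ℕ} (P : Fin k → ZMod n × ZMod n) (e : ZMod n)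
    (s : ℕ) (q : Fin s → Fin k) : Prop :=
  Function.Injective q ∧
  (∀ r : Fin s, IncidentE (P (q r)) e) ∧
  (∀ i : Fin k, IncidentE (P i) e → ∃ r : Fin s, q r = i) ∧
  (∀ r r' : Fin s, r < r' →
    keyW (e + 1) (otherEnd (P (q r')) e) < keyW (e + 1) (otherEnd (P (q r)) e))

/-- The polynomial
`R_e = x_{q₁,e+1} · (∏_{r=1}^{s-1} (x_{q_r,e} x_{q_{r+1},e+1} − x_{q_r,e+1} x_{q_{r+1},e})) · x_{q_s,e}`,
with `R_e = 1` when no propagator is incident to `e`. -/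
noncomputable def Redge (k n : ℕ) (e : ZMod n) (s : ℕ) (q : Fin s → Fin k) :
    WR k n :=
  if h : s = 0 then 1 else
    have hs : 0 < s := Nat.pos_of_ne_zero h
    X (q ⟨0, hs⟩, e + 1) *
      (∏ r : Fin (s - 1),
        (X (q ⟨r.1, by have := r.2; omega⟩, e) *
            X (q ⟨r.1 + 1, by have := r.2; omega⟩, e + 1) -
          X (q ⟨r.1, by have := r.2; omega⟩, e + 1) *
            X (q ⟨r.1 + 1, by have := r.2; omega⟩, e))) *
      X (q ⟨s - 1, by omega⟩, e)

/-!
Fix `a` and read the edges of the polygon backwards from `a - 2`, so that the propagators become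
noncrossing arcs above the corners `0, …, n - 1`. Let `z` be a vector in the kernel of the
(specialized) matrix. If `z` vanishes at both vertices of two successive neighbours `j₁`, `j₂` of
an edge `e`, then `j₁` and `j₂` each give a linear relation between `z e` and `z (e + 1)`, and the
determinant of the two relations is exactly the factor of `R_e` belonging to the gap between
`j₁` and `j₂`; when it is nonzero, `z` vanishes at `e` as well. Let `D a` be the set of vertices
that can be inferred to vanish from the earlier ones in this way. An induction over the arcs gives
`k ≤ #(D a)`, while no nonzero kernel vector is supported on `D a`. Hence `D a` is the necklace
element `I_a`, and a prime ideal containing the minor on `I_a` contains some `R_e`.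

Conversely, modulo the factor belonging to the gap between `j₁` and `j₂`, one of the rows meeting
the gap becomes redundant for vectors vanishing at `j₁` and `j₂`, and counting inside `D (j₁ + 2)`
leaves a nonzero kernel vector supported there; so this factor divides the minor on `I_{j₁ + 2}`.
The factors are pairwise non-associated primes, so their product `R` is squarefree and divides
everything that they all divide.
-/

section Arcs

variable {A : Finset (ℕ × ℕ)} {u v w h x y s t c : ℕ}

/-- A noncrossing family of arcs above the half-line `0, 1, 2, …` of corners. The unit steps
`(c, c + 1)` are not arcs, but count as adjacencies in `ArcAdj`. -/
structure IsArcDiagram (A : Finset (ℕ × ℕ)) : Prop where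
  long : ∀ {x y}, (x, y) ∈ A → x + 1 < y
  noncrossing : ∀ {x y x' y'}, (x, y) ∈ A → (x', y') ∈ A → x < x' → x' < y → y' ≤ y

/-- Adjacency of the corners `x < y`: they are consecutive or joined by an arc. -/
def ArcAdj (A : Finset (ℕ × ℕ)) (x y : ℕ) : Prop := y = x + 1 ∨ (x, y) ∈ A

/-- The corners that can be reached from the corners below `s` by repeatedly adding a corner `c`
two of whose cyclically consecutive neighbours have already been reached. The neighbours of `c`
are read around `c`; either both lie below `c` (`left`), or they are the least lower and the
greatest upper neighbour (`straddle`). -/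
inductive Inferred (A : Finset (ℕ × ℕ)) (s : ℕ) : ℕ → Prop
  | of_lt {c : ℕ} (hc : c < s) : Inferred A s c
  | left {o x c : ℕ} (hox : o < x) (ho : ArcAdj A o c) (hx : ArcAdj A x c)
      (gap : ∀ y, o < y → y < x → ¬ ArcAdj A y c) :
      Inferred A s o → Inferred A s x → Inferred A s c
  | straddle {x c o : ℕ} (hx : ArcAdj A x c) (ho : ArcAdj A c o)
      (least : ∀ y < x, ¬ ArcAdj A y c) (greatest : ∀ y, o < y → ¬ ArcAdj A c y) :
      Inferred A s x → Inferred A s o → Inferred A s c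

/-- The arcs with both ends in `[u, v]`. -/
def arcsIn (A : Finset (ℕ × ℕ)) (u v : ℕ) : Finset (ℕ × ℕ) :=
  {p ∈ A | u ≤ p.1 ∧ p.2 ≤ v}

/-- The arcs with both ends in `{u} ∪ [h, v]`, an arc from `u` to `h` excluded. -/
def fan (A : Finset (ℕ × ℕ)) (u h v : ℕ) : Finset (ℕ × ℕ) :=
  {p ∈ A | p.2 ≤ v ∧ (p.1 = u ∧ h < p.2 ∨ h ≤ p.1)}

open Classical in
/-- The corners of `(u, v]` that can be inferred from the corners strictly below them. -/
noncomputable def freshIn (A : Finset (ℕ × ℕ)) (u v : ℕ) : Finset ℕ :=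
  {t ∈ Finset.Ioc u v | Inferred A t t}

theorem mem_freshIn : t ∈ freshIn A u v ↔ (u < t ∧ t ≤ v) ∧ Inferred A t t := by
  simp only [freshIn, Finset.mem_filter, Finset.mem_Ioc]

theorem card_freshIn_add (huw : u ≤ w) (hwv : w ≤ v) :
    (freshIn A u w).card + (freshIn A w v).card = (freshIn A u v).card := by
  classical
  rw [← Finset.card_union_of_disjoint, freshIn, freshIn, ← Finset.filter_union,
    Finset.Ioc_union_Ioc_eq_Ioc huw hwv, freshIn]
  exact Finset.disjoint_left.2 fun t ht ht' => by
    rw [mem_freshIn] at ht ht'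
    omega

theorem card_freshIn_mono (huw : u ≤ w) : (freshIn A w v).card ≤ (freshIn A u v).card :=
  Finset.card_le_card fun t ht => by
    rw [mem_freshIn] at ht ⊢
    exact ⟨⟨huw.trans_lt ht.1.1, ht.1.2⟩, ht.2⟩

theorem Inferred.mono (hst : s ≤ t) (hc : Inferred A s c) : Inferred A t c := by
  induction hc with
  | of_lt hc => exact .of_lt (hc.trans_le hst)
  | left hox ho hx gap _ _ iho ihx => exact .left hox ho hx gap iho ihx
  | straddle hx ho least greatest _ _ ihx iho => exact .straddle hx ho least greatest ihx iho

theorem exists_least_lower_nbr (hwv : w < v) :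
    ∃ x, w ≤ x ∧ ArcAdj A x v ∧ ∀ y, w ≤ y → y < x → ¬ ArcAdj A y v := by
  classical
  have hex : ∃ x, w ≤ x ∧ ArcAdj A x v := ⟨v - 1, by omega, .inl (by omega)⟩
  exact ⟨Nat.find hex, (Nat.find_spec hex).1, (Nat.find_spec hex).2,
    fun y hwy hy hadj => Nat.find_min hex hy ⟨hwy, hadj⟩⟩

theorem fan_eq_arcsIn (hno : ∀ y, h < y → y ≤ v → ¬ ArcAdj A u y) :
    fan A u h v = arcsIn A h v :=
  Finset.filter_congr fun p hp => by
    have : p.1 = u → h < p.2 → ¬ p.2 ≤ v := fun hpu hhp hpv =>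
      hno p.2 hhp hpv (.inr (hpu ▸ hp))
    tauto

theorem one_le_card_freshIn_succ (hinf : Inferred A (w + 1) (w + 1)) :
    1 ≤ (freshIn A w (w + 1)).card :=
  Finset.card_pos.2 ⟨w + 1, mem_freshIn.2 ⟨by omega, hinf⟩⟩

namespace IsArcDiagram

variable (hA : IsArcDiagram A)
include hA

theorem lt_of_adj (hxy : ArcAdj A x y) : x < y := by
  rcases hxy with rfl | hxy
  · exact x.lt_succ_self
  · exact (Nat.lt_succ_self x).trans (hA.long hxy)

theorem le_of_adj {x' y' : ℕ} (hxy : ArcAdj A x y) (hxy' : ArcAdj A x' y')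
    (hxx' : x < x') (hx'y : x' < y) : y' ≤ y := by
  rcases hxy with rfl | hxy
  · omega
  rcases hxy' with rfl | hxy'
  · exact hx'y
  · exact hA.noncrossing hxy hxy' hxx' hx'y

theorem le_of_inferred {N : ℕ} (hN : ∀ p ∈ A, p.2 ≤ N) (hs : s ≤ N + 1)
    (hc : Inferred A s c) : c ≤ N := by
  induction hc with
  | of_lt hc => omega
  | left hox ho hx =>
    rcases ho with rfl | ho
    · exact absurd (hA.lt_of_adj hx) (by omega)
    · exact hN _ ho
  | straddle _ ho _ _ _ _ _ iho => exact (hA.lt_of_adj ho).le.trans iho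

theorem inferred_of_hub_left {o : ℕ} (how : o < w) (ho : ArcAdj A o w) (hov : ArcAdj A o v)
    (hwx : w ≤ x) (hxv : ArcAdj A x v) (least : ∀ y, w ≤ y → y < x → ¬ ArcAdj A y v) :
    Inferred A (x + 1) v := by
  refine .left (how.trans_le hwx) hov hxv (fun y hoy hyx hyv => ?_)
    (.of_lt (by omega)) (.of_lt x.lt_succ_self)
  refine least y (le_of_not_gt fun hyw => ?_) hyx hyv
  have := hA.le_of_adj ho hyv hoy hyw
  have := hA.lt_of_adj hxv
  omega

theorem inferred_of_hub_right {o : ℕ} (how : ArcAdj A w o) (hov : ArcAdj A v o)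
    (hwx : w ≤ x) (hxv : ArcAdj A x v) (least : ∀ y, w ≤ y → y < x → ¬ ArcAdj A y v)
    (hinf : Inferred A (w + 1) o) : Inferred A (x + 1) v := by
  have hxltv := hA.lt_of_adj hxv
  have hvlto := hA.lt_of_adj hov
  refine .straddle hxv hov (fun y hyx hyv => ?_) (fun y hoy hvy => ?_)
    (.of_lt x.lt_succ_self) (hinf.mono (by omega))
  · refine least y (le_of_not_gt fun hyw => ?_) hyx hyv
    exact absurd (hA.le_of_adj hyv how hyw (by omega)) (by omega)
  · exact absurd (hA.le_of_adj how hvy (by omega) hvlto) (by omega)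

theorem arcsIn_succ : arcsIn A u (u + 1) = ∅ :=
  Finset.filter_eq_empty_iff.2 fun p hp hpu => by
    have := hA.long hp
    omega

theorem arcsIn_eq_fan : arcsIn A u v = fan A u (u + 1) v :=
  Finset.filter_congr fun p hp => by
    have := hA.long hp
    omega

theorem fan_eq_empty (hvh : v ≤ h) : fan A u h v = ∅ :=
  Finset.filter_eq_empty_iff.2 fun p hp hpu => by
    have := hA.long hp
    omega

theorem card_arcsIn_le_add_one (hyv : ArcAdj A y v)
    (gap : ∀ t, w < t → t < y → ¬ ArcAdj A t v) :
    (arcsIn A w v).card ≤ (arcsIn A w y).card + (arcsIn A y v).card + 1 := by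
  have hsub : arcsIn A w v ⊆ insert (w, v) (arcsIn A w y ∪ arcsIn A y v) := by
    intro p hp
    simp only [arcsIn, Finset.mem_insert, Finset.mem_union, Finset.mem_filter] at hp ⊢
    obtain ⟨hpA, hwp, hpv⟩ := hp
    by_cases hpy : p.2 ≤ y
    · exact .inr (.inl ⟨hpA, hwp, hpy⟩)
    by_cases hyp : y ≤ p.1
    · exact .inr (.inr ⟨hpA, hyp, hpv⟩)
    have hvp : v ≤ p.2 := hA.le_of_adj (.inr hpA) hyv (not_le.1 hyp) (not_le.1 hpy)
    have hpadj : ArcAdj A p.1 v := .inr (le_antisymm hpv hvp ▸ hpA)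
    refine .inl (Prod.ext (le_antisymm (le_of_not_gt fun hlt => ?_) hwp) (le_antisymm hpv hvp))
    exact gap p.1 hlt (not_le.1 hyp) hpadj
  grw [hsub, Finset.card_insert_le, Finset.card_union_le]

theorem card_arcsIn_le_add (hxv : ArcAdj A x v)
    (least : ∀ y, w ≤ y → y < x → ¬ ArcAdj A y v) :
    (arcsIn A w v).card ≤ (arcsIn A w x).card + (arcsIn A x v).card := by
  have hsub : arcsIn A w v ⊆ arcsIn A w x ∪ arcsIn A x v := by
    intro p hp
    simp only [arcsIn, Finset.mem_union, Finset.mem_filter] at hp ⊢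
    obtain ⟨hpA, hwp, hpv⟩ := hp
    by_cases hpx : p.2 ≤ x
    · exact .inl ⟨hpA, hwp, hpx⟩
    by_cases hxp : x ≤ p.1
    · exact .inr ⟨hpA, hxp, hpv⟩
    have hvp : v ≤ p.2 := hA.le_of_adj (.inr hpA) hxv (not_le.1 hxp) (not_le.1 hpx)
    exact absurd (.inr (le_antisymm hpv hvp ▸ hpA)) (least p.1 hwp (not_le.1 hxp))
  grw [hsub, Finset.card_union_le]

theorem card_fan_le (huy : u < y) (huh : ArcAdj A u h)
    (gap : ∀ t, y < t → t < h → ¬ ArcAdj A u t) :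
    (fan A u y v).card ≤ (arcsIn A y h).card + 1 + (fan A u h v).card := by
  have hsub : fan A u y v ⊆ insert (u, h) (arcsIn A y h) ∪ fan A u h v := by
    rintro ⟨p, p'⟩ hp
    simp only [fan, arcsIn, Finset.mem_union, Finset.mem_insert, Finset.mem_filter,
      Prod.mk.injEq] at hp ⊢
    obtain ⟨hpA, hpv, ⟨rfl, hyp⟩ | hyp⟩ := hp
    · have := mt (gap p' hyp) (not_not.2 (.inr hpA))
      grind
    · have := fun hph => hA.le_of_adj huh (.inr hpA) (huy.trans_le hyp) hph
      grind
  grw [hsub, Finset.card_union_le, Finset.card_insert_le]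

mutual

theorem card_arcsIn_lt_of_adj {w v : ℕ} (hwv : ArcAdj A w v) (hinf : Inferred A (w + 1) v) :
    (arcsIn A w v).card + 1 ≤ (freshIn A w v).card := by
  have hlt := hA.lt_of_adj hwv
  by_cases hv : v = w + 1
  · subst hv
    simpa only [hA.arcsIn_succ, Finset.card_empty] using one_le_card_freshIn_succ hinf
  obtain ⟨y, hwy, hyv, least⟩ := exists_least_lower_nbr (A := A) (by omega : w + 1 < v)
  have hyltv := hA.lt_of_adj hyv
  obtain ⟨z, hwz, hzy, leastz⟩ := exists_least_lower_nbr (A := A) (by omega : w < y)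
  have hleft := card_arcsIn_lt_of_least hwz hzy leastz
    (hA.inferred_of_hub_right hwv hyv hwz hzy leastz hinf)
  have hright := card_arcsIn_lt_of_adj hyv (hinf.mono (by omega))
  have hsplit := hA.card_arcsIn_le_add_one hyv least
  have hsum := card_freshIn_add (A := A) (by omega : w ≤ y) hyltv.le
  omega
termination_by 3 * (v - w)

theorem card_arcsIn_lt_of_least {w v x : ℕ} (hwx : w ≤ x) (hxv : ArcAdj A x v)
    (least : ∀ y, w ≤ y → y < x → ¬ ArcAdj A y v) (hinf : Inferred A (x + 1) v) :
    (arcsIn A w v).card + 1 ≤ (freshIn A w v).card := by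
  have hxltv := hA.lt_of_adj hxv
  have hleft : (arcsIn A w x).card ≤ (freshIn A (w + 1) x).card :=
    hA.arcsIn_eq_fan ▸ card_fan_le_freshIn (.inl rfl)
  have hright := card_arcsIn_lt_of_adj hxv hinf
  have hsplit := hA.card_arcsIn_le_add hxv least
  have hmono := card_freshIn_mono (A := A) (v := x) (Nat.le_add_right w 1)
  have hsum := card_freshIn_add (A := A) hwx hxltv.le
  omega
termination_by 3 * (v - w) + 1

theorem card_fan_le_freshIn {u h v : ℕ} (huh : ArcAdj A u h) :
    (fan A u h v).card ≤ (freshIn A h v).card := by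
  have huh' := hA.lt_of_adj huh
  rcases le_or_gt v h with hvh | _
  · simp only [hA.fan_eq_empty hvh, Finset.card_empty, zero_le]
  classical
  by_cases hex : ∃ w, h < w ∧ w ≤ v ∧ ArcAdj A u w
  · obtain ⟨w, ⟨hhw, hwv, huw⟩, minimal⟩ :
        ∃ w, (h < w ∧ w ≤ v ∧ ArcAdj A u w) ∧ ∀ t < w, ¬ (h < t ∧ t ≤ v ∧ ArcAdj A u t) :=
      ⟨Nat.find hex, Nat.find_spec hex, fun _ => Nat.find_min hex⟩
    obtain ⟨x, hhx, hxw, least⟩ := exists_least_lower_nbr (A := A) hhw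
    have hcell := card_arcsIn_lt_of_least hhx hxw least
      (hA.inferred_of_hub_left huh' huh huw hhx hxw least)
    have hrest := card_fan_le_freshIn (v := v) huw
    have hsplit := hA.card_fan_le (v := v) huh' huw
      fun t hht htw hut => minimal t htw ⟨hht, htw.le.trans hwv, hut⟩
    have hsum := card_freshIn_add (A := A) hhw.le hwv
    omega
  · push Not at hex
    rw [fan_eq_arcsIn hex, hA.arcsIn_eq_fan]
    exact (card_fan_le_freshIn (.inl rfl)).trans (card_freshIn_mono (Nat.le_add_right h 1))
termination_by 3 * (v - h) + 2

end

theorem card_fan_le_freshIn_of_cell (huy : u < y) (hyh : ArcAdj A y h) (huh : ArcAdj A u h)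
    (gap : ∀ t, u < t → t < y → ¬ ArcAdj A t h) (hhv : h ≤ v) :
    (fan A u y v).card ≤ (freshIn A y v).card := by
  have hylth := hA.lt_of_adj hyh
  have hcell := hA.card_arcsIn_lt_of_adj hyh
    (.left huy huh hyh gap (.of_lt (by omega)) (.of_lt y.lt_succ_self))
  have hsplit := hA.card_fan_le (v := v) huy huh fun t hyt hth hut =>
    absurd (hA.le_of_adj hut hyh huy hyt) (not_le.2 hth)
  have hrest := hA.card_fan_le_freshIn (v := v) huh
  have hsum := card_freshIn_add (A := A) hylth.le hhv
  omega

theorem snd_le_of_notMem_fan (hyh : ArcAdj A y h) (huh : ArcAdj A u h)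
    (gap : ∀ t, u < t → t < y → ¬ ArcAdj A t h) (hst : (s, t) ∈ A) (hus : u ≤ s) (htv : t ≤ v)
    (hnot : (s, t) ∉ fan A u y v) : t ≤ y := by
  simp only [fan, Finset.mem_filter, hst, htv, true_and, not_or, not_and, not_lt, not_le] at hnot
  obtain ⟨hsu, hsy⟩ := hnot
  obtain rfl | hus := hus.eq_or_lt
  · exact hsu rfl
  refine le_of_not_gt fun hyt => gap s hus hsy (.inr ?_)
  have hht : h ≤ t := hA.le_of_adj (.inr hst) hyh hsy hyt
  have hth : t ≤ h := hA.le_of_adj huh (.inr hst) hus (hsy.trans (hA.lt_of_adj hyh))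
  rwa [← le_antisymm hth hht]

theorem card_le_freshIn {N : ℕ} (hN : ∀ p ∈ A, p.2 ≤ N) :
    A.card ≤ (freshIn A 1 N).card := by
  have hfan : fan A 0 1 N = A := Finset.filter_true_of_mem fun p hp => by
    have := hA.long hp
    have := hN p hp
    omega
  simpa only [hfan] using hA.card_fan_le_freshIn (u := 0) (h := 1) (v := N) (.inl rfl)

end IsArcDiagram

end Arcs

section Dissections

variable {k n : ℕ} {P : Fin k → ZMod n × ZMod n} {i : Fin k} {e j j₁ j₂ : ZMod n}

/-- The propagator `P i` is the unordered pair `{e, j}`. -/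
def Joins (P : Fin k → ZMod n × ZMod n) (i : Fin k) (e j : ZMod n) : Prop :=
  s((P i).1, (P i).2) = s(e, j)

theorem Joins.symm (h : Joins P i e j) : Joins P i j e :=
  h.trans Sym2.eq_swap

theorem propSupp_eq_of_joins (h : Joins P i e j) :
    propSupp (P i) = {e, e + 1} ∪ {j, j + 1} := by
  rcases Sym2.eq_iff.1 h with ⟨h₁, h₂⟩ | ⟨h₁, h₂⟩ <;> rw [propSupp, h₁, h₂] <;> grind

/-- The propagators are pairwise distinct, pairwise noncrossing diagonals of the polygon with
edges `ZMod n`, none of them joining an edge to itself or to an adjacent edge. -/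
structure IsDissection (P : Fin k → ZMod n × ZMod n) : Prop where
  three_le : 3 ≤ n
  far : ∀ {i e j}, Joins P i e j → j ≠ e ∧ j ≠ e + 1
  injective : Function.Injective fun i => s((P i).1, (P i).2)
  noncrossing : ∀ i i', ¬ Cross (P i) (P i')

/-- The edges `e` and `j` are adjacent sides of the polygon or joined by a propagator. -/
def Nbr (P : Fin k → ZMod n × ZMod n) (e j : ZMod n) : Prop :=
  j = e + 1 ∨ e = j + 1 ∨ ∃ i, Joins P i e j

theorem Nbr.symm (h : Nbr P e j) : Nbr P j e := by
  rcases h with h | h | ⟨i, h⟩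
  · exact .inr (.inl h)
  · exact .inl h
  · exact .inr (.inr ⟨i, h.symm⟩)

/-- `j₁` and `j₂` are successive neighbours of `e`, with `j₂` immediately before `j₁` in the
cyclic order that starts at `e + 1`. -/
structure Consec (P : Fin k → ZMod n × ZMod n) (e j₁ j₂ : ZMod n) : Prop where
  nbr_left : Nbr P e j₁
  nbr_right : Nbr P e j₂
  key_lt : keyW (e + 1) j₂ < keyW (e + 1) j₁
  gap : ∀ {j}, Nbr P e j → keyW (e + 1) j₂ < keyW (e + 1) j → keyW (e + 1) j₁ ≤ keyW (e + 1) j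

/-- The edge at the `c`-th corner, the corners being read backwards from `a - 2`. -/
def edgeAt (a : ZMod n) (c : ℕ) : ZMod n := a - 2 - c

/-- The corner at which the edge `e` sits, when the corners are read backwards from `a - 2`. -/
def corner (a e : ZMod n) : ℕ := (a - 2 - e).val

/-- The propagator `P i` as an arc on the corners read backwards from `a - 2`. -/
def arc (P : Fin k → ZMod n × ZMod n) (a : ZMod n) (i : Fin k) : ℕ × ℕ :=
  (min (corner a (P i).1) (corner a (P i).2), max (corner a (P i).1) (corner a (P i).2))

/-- The propagators and the side `{a - 2, a - 1}`, as arcs on the corners read backwards from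
`a - 2`. -/
def arcs (P : Fin k → ZMod n × ZMod n) (a : ZMod n) : Finset (ℕ × ℕ) :=
  insert (0, n - 1) (Finset.univ.image (arc P a))

variable {a : ZMod n} {c x y : ℕ}

theorem corner_edgeAt (hc : c < n) : corner a (edgeAt a c) = c := by
  rw [edgeAt, corner, sub_sub_cancel, ZMod.val_cast_of_lt hc]

theorem edgeAt_zero (j : ZMod n) : edgeAt (j + 2) 0 = j := by
  simp only [edgeAt, Nat.cast_zero, add_sub_cancel_right, sub_zero]

theorem val_edgeAt_sub_edgeAt (hx : x < n) (hy : y < n) :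
    (edgeAt a y - edgeAt a x).val = if y ≤ x then x - y else n + x - y := by
  have hsub : edgeAt a y - edgeAt a x = x - y := by
    unfold edgeAt
    ring
  split_ifs with hyx
  · rw [hsub, ← Nat.cast_sub hyx, ZMod.val_cast_of_lt (by omega)]
  · have hcast : ((n + x - y : ℕ) : ZMod n) = x - y := by
      rw [Nat.cast_sub (by omega), Nat.cast_add, ZMod.natCast_self, zero_add]
    rw [hsub, ← hcast, ZMod.val_cast_of_lt (by omega)]

theorem eq_add_one_iff_val (hn : 1 < n) : j = e + 1 ↔ (j - e).val = 1 := by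
  have : Fact (1 < n) := ⟨hn⟩
  rw [← sub_eq_iff_eq_add', ← ZMod.val_injective n |>.eq_iff, ZMod.val_one]

theorem keyW_edgeAt (hx : x < n) (hc : c < n) :
    keyW (edgeAt a c + 1) (edgeAt a x) = if x < c then c - x - 1 else n + c - x - 1 := by
  have hsub : edgeAt a x - (edgeAt a c + 1) = c - x - 1 := by
    unfold edgeAt
    ring
  rw [keyW, hsub]
  split_ifs with hxc
  · have hcast : ((c - x - 1 : ℕ) : ZMod n) = c - x - 1 := by
      rw [Nat.cast_sub (by omega), Nat.cast_sub (by omega), Nat.cast_one]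
    rw [← hcast, ZMod.val_cast_of_lt (by omega)]
  · have hcast : ((n + c - x - 1 : ℕ) : ZMod n) = c - x - 1 := by
      rw [Nat.cast_sub (by omega), Nat.cast_sub (by omega), Nat.cast_add, ZMod.natCast_self,
        zero_add, Nat.cast_one]
    rw [← hcast, ZMod.val_cast_of_lt (by omega)]

theorem edgeAt_succ_add_one (a : ZMod n) (c : ℕ) : edgeAt a (c + 1) + 1 = edgeAt a c := by
  simp only [edgeAt, Nat.cast_add, Nat.cast_one]
  ring

theorem IsDissection.one_lt (hP : IsDissection P) : 1 < n :=
  Nat.lt_of_succ_lt hP.three_le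

theorem IsDissection.not_nbr_self (hP : IsDissection P) (e : ZMod n) : ¬ Nbr P e e := by
  have : Fact (1 < n) := ⟨hP.one_lt⟩
  rintro (h | h | ⟨i, h⟩)
  · exact one_ne_zero (left_eq_add.1 h)
  · exact one_ne_zero (left_eq_add.1 h)
  · exact (hP.far h).1 rfl

theorem cross_of_joins {i' : Fin k} {x' y' : ℕ} (hxx' : x < x') (hx'y : x' < y) (hyy' : y < y')
    (hy' : y' < n) (h : Joins P i (edgeAt a x) (edgeAt a y))
    (h' : Joins P i' (edgeAt a x') (edgeAt a y')) : Cross (P i) (P i') := by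
  have hin : Inside (edgeAt a y) (edgeAt a x') (edgeAt a x) := by
    unfold Inside
    rw [val_edgeAt_sub_edgeAt (by omega) (by omega), val_edgeAt_sub_edgeAt (by omega) (by omega)]
    split_ifs <;> omega
  have hout : Inside (edgeAt a x) (edgeAt a y') (edgeAt a y) := by
    unfold Inside
    rw [val_edgeAt_sub_edgeAt (by omega) (by omega), val_edgeAt_sub_edgeAt (by omega) (by omega)]
    split_ifs <;> omega
  rw [Joins, Sym2.eq_iff] at h h'
  unfold Cross
  rcases h with ⟨h₁, h₂⟩ | ⟨h₁, h₂⟩ <;> rcases h' with ⟨h₁', h₂'⟩ | ⟨h₁', h₂'⟩ <;>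
    rw [h₁, h₂, h₁', h₂']
  exacts [.inr ⟨hout, hin⟩, .inl ⟨hout, hin⟩, .inl ⟨hin, hout⟩, .inr ⟨hin, hout⟩]

theorem IsDissection.succ_lt_of_joins (hP : IsDissection P) (hxy : x < y)
    (h : Joins P i (edgeAt a x) (edgeAt a y)) : x + 1 < y := by
  refine lt_of_le_of_ne hxy fun hne => (hP.far h.symm).2 ?_
  rw [← hne, edgeAt_succ_add_one]

theorem Admissible.isDissection (hW : Admissible n (Multiset.map P Finset.univ.val)) :
    IsDissection P := by
  obtain ⟨noncrossing, localDensity, globalDensity⟩ := hW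
  have hmem : ∀ i, P i ∈ Multiset.map P Finset.univ.val := fun i =>
    Multiset.mem_map_of_mem P (Finset.mem_univ i)
  have card_single : ∀ i, 4 ≤ (propSupp (P i)).card := fun i => by
    simpa [multiSupp] using
      localDensity {P i} (Multiset.singleton_le.2 (hmem i)) (Multiset.singleton_ne_zero _)
  have card_pair : ∀ i i', i ≠ i' → 5 ≤ (propSupp (P i) ∪ propSupp (P i')).card :=
    fun i i' hne => by
      have hle : ({i, i'} : Multiset (Fin k)) ≤ Finset.univ.val :=
        (Multiset.le_iff_subset (by simpa using hne)).2 fun x _ => Finset.mem_univ x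
      simpa [multiSupp] using localDensity _ (Multiset.map_le_map hle) (by simp)
  refine ⟨by omega, fun {i e j} h => ⟨?_, ?_⟩, fun i i' heq => ?_, fun i i' =>
    noncrossing _ (hmem i) _ (hmem i')⟩
  · rintro rfl
    have hcard := card_single i
    rw [propSupp_eq_of_joins h, Finset.union_self] at hcard
    have := hcard.trans Finset.card_le_two
    omega
  · rintro rfl
    have hcard := card_single i
    rw [propSupp_eq_of_joins h, Finset.insert_union, Finset.singleton_union,
      Finset.insert_idem] at hcard
    have := hcard.trans Finset.card_le_three
    omega
  · by_contra hne
    have hcard := card_pair i i' hne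
    have hsupp : propSupp (P i) = propSupp (P i') := (propSupp_eq_of_joins heq).trans
      (propSupp_eq_of_joins rfl).symm
    rw [hsupp, Finset.union_self] at hcard
    have : 5 ≤ 4 := hcard.trans Finset.card_le_four
    omega

variable [NeZero n]

theorem corner_lt (a e : ZMod n) : corner a e < n := ZMod.val_lt _

@[simp]
theorem edgeAt_corner (a e : ZMod n) : edgeAt a (corner a e) = e := by
  rw [edgeAt, corner, ZMod.natCast_rightInverse, sub_sub_cancel]

theorem edgeAt_eq_iff (hc : c < n) : edgeAt a c = e ↔ c = corner a e :=
  ⟨fun h => by rw [← h, corner_edgeAt hc], fun h => by rw [h, edgeAt_corner]⟩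

theorem edgeAt_zero_add_one (a : ZMod n) : edgeAt a 0 + 1 = edgeAt a (n - 1) := by
  simp only [edgeAt, Nat.cast_sub NeZero.one_le, ZMod.natCast_self, Nat.cast_zero, Nat.cast_one]
  ring

theorem arc_eq_iff_joins (hxy : x < y) (hy : y < n) :
    arc P a i = (x, y) ↔ Joins P i (edgeAt a x) (edgeAt a y) := by
  rw [arc, Joins, Sym2.eq_iff, eq_comm (b := edgeAt a x), eq_comm (b := edgeAt a x),
    eq_comm (b := edgeAt a y), eq_comm (b := edgeAt a y), edgeAt_eq_iff hy, edgeAt_eq_iff hy,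
    edgeAt_eq_iff (hxy.trans hy), edgeAt_eq_iff (hxy.trans hy), Prod.mk.injEq]
  omega

theorem mem_arcs_iff (hxy : x < y) (hy : y < n) :
    (x, y) ∈ arcs P a ↔ x = 0 ∧ y = n - 1 ∨ ∃ i, Joins P i (edgeAt a x) (edgeAt a y) := by
  simp only [arcs, Finset.mem_insert, Finset.mem_image, Finset.mem_univ, true_and,
    arc_eq_iff_joins hxy hy, Prod.mk.injEq]

theorem snd_le_of_mem_arcs {p : ℕ × ℕ} (hp : p ∈ arcs P a) : p.2 ≤ n - 1 := by
  simp only [arcs, Finset.mem_insert, Finset.mem_image, Finset.mem_univ, true_and] at hp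
  obtain rfl | ⟨i, rfl⟩ := hp
  · exact le_rfl
  · have := corner_lt a (P i).1
    have := corner_lt a (P i).2
    rw [arc]
    omega

namespace IsDissection

variable (hP : IsDissection P)
include hP

theorem nbr_edgeAt_iff (hxy : x < y) (hy : y < n) :
    Nbr P (edgeAt a x) (edgeAt a y) ↔ ArcAdj (arcs P a) x y := by
  have := hP.three_le
  rw [Nbr, ArcAdj, mem_arcs_iff hxy hy, eq_add_one_iff_val (by omega),
    eq_add_one_iff_val (by omega), val_edgeAt_sub_edgeAt (by omega) hy,
    val_edgeAt_sub_edgeAt hy (by omega), if_neg hxy.not_ge, if_pos hxy.le]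
  have hroot : n + x - y = 1 ↔ x = 0 ∧ y = n - 1 := by omega
  have hstep : y - x = 1 ↔ y = x + 1 := by omega
  rw [hroot, hstep]
  tauto

theorem exists_arc (a : ZMod n) (i : Fin k) :
    ∃ x y, x < y ∧ y < n ∧ Joins P i (edgeAt a x) (edgeAt a y) := by
  have hne : corner a (P i).1 ≠ corner a (P i).2 := fun h =>
    (hP.far (i := i) rfl).1 (by rw [← edgeAt_corner a (P i).2, ← h, edgeAt_corner])
  have hlt := max_lt (corner_lt a (P i).1) (corner_lt a (P i).2)
  exact ⟨_, _, min_lt_max.2 hne, hlt, (arc_eq_iff_joins (min_lt_max.2 hne) hlt).1 rfl⟩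

theorem arcs_cases {p : ℕ × ℕ} (hp : p ∈ arcs P a) :
    p = (0, n - 1) ∨ p.1 < p.2 ∧ p.2 < n ∧ ∃ i, Joins P i (edgeAt a p.1) (edgeAt a p.2) := by
  simp only [arcs, Finset.mem_insert, Finset.mem_image, Finset.mem_univ, true_and] at hp
  refine hp.imp_right fun ⟨i, hi⟩ => ?_
  obtain ⟨x, y, hxy, hy, hj⟩ := hP.exists_arc a i
  obtain rfl := hi.symm.trans ((arc_eq_iff_joins hxy hy).2 hj)
  exact ⟨hxy, hy, i, hj⟩

theorem isArcDiagram_arcs (a : ZMod n) : IsArcDiagram (arcs P a) where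
  long hp := by
    have := hP.three_le
    obtain h | ⟨hxy, _, i, hi⟩ := hP.arcs_cases hp
    · rw [Prod.mk.injEq] at h
      omega
    · exact hP.succ_lt_of_joins hxy hi
  noncrossing hp hp' hxx' hx'y := by
    obtain h | ⟨_, _, i, hi⟩ := hP.arcs_cases hp
    · rw [Prod.mk.injEq] at h
      exact h.2 ▸ snd_le_of_mem_arcs hp'
    obtain h' | ⟨_, hy', i', hi'⟩ := hP.arcs_cases hp'
    · rw [Prod.mk.injEq] at h'
      omega
    exact le_of_not_gt fun hlt => hP.noncrossing i i' (cross_of_joins hxx' hx'y hlt hy' hi hi')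

theorem arc_injective (a : ZMod n) : Function.Injective (arc P a) := by
  intro i i' heq
  obtain ⟨x, y, hxy, hy, hj⟩ := hP.exists_arc a i
  have hij := (arc_eq_iff_joins hxy hy).2 hj
  have hij' := (arc_eq_iff_joins hxy hy).1 (heq.symm.trans hij)
  exact hP.injective (Eq.trans hj (Eq.symm hij'))

theorem arc_ne_root (a : ZMod n) (i : Fin k) : arc P a i ≠ (0, n - 1) := fun hi => by
  have := hP.three_le
  exact (hP.far ((arc_eq_iff_joins (by omega) (by omega)).1 hi)).2 (edgeAt_zero_add_one a).symm

theorem card_filter_arc_mem_lt {F : Finset (ℕ × ℕ)} (hroot : (0, n - 1) ∈ F) :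
    ({i | arc P a i ∈ F} : Finset (Fin k)).card < F.card := by
  rw [← Finset.card_image_of_injective _ (hP.arc_injective a)]
  refine Finset.card_lt_card (Finset.ssubset_iff_of_subset ?_ |>.2 ⟨_, hroot, ?_⟩)
  · exact Finset.image_subset_iff.2 fun i hi => (Finset.mem_filter.1 hi).2
  · rw [Finset.mem_image]
    exact fun ⟨i, _, hi⟩ => hP.arc_ne_root a i hi

theorem card_arcs (a : ZMod n) : (arcs P a).card = k + 1 := by
  rw [arcs, Finset.card_insert_of_notMem, Finset.card_image_of_injective _ (hP.arc_injective a),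
    Finset.card_fin]
  simp only [Finset.mem_image, Finset.mem_univ, true_and, not_exists]
  exact hP.arc_ne_root a

theorem consec_of_left {o : ℕ} (hc : c < n) (hox : o < x) (hoc : ArcAdj (arcs P a) o c)
    (hxc : ArcAdj (arcs P a) x c) (gap : ∀ y, o < y → y < x → ¬ ArcAdj (arcs P a) y c) :
    Consec P (edgeAt a c) (edgeAt a o) (edgeAt a x) := by
  have hxltc := (hP.isArcDiagram_arcs a).lt_of_adj hxc
  refine ⟨((hP.nbr_edgeAt_iff (hox.trans hxltc) hc).2 hoc).symm,
    ((hP.nbr_edgeAt_iff hxltc hc).2 hxc).symm, ?_, fun {j} hj hlt => ?_⟩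
  · rw [keyW_edgeAt (by omega) hc, keyW_edgeAt (by omega) hc]
    split_ifs <;> omega
  · obtain ⟨y, hy, rfl⟩ : ∃ y < n, edgeAt a y = j := ⟨_, corner_lt a j, edgeAt_corner a j⟩
    have hgap : ¬ (o < y ∧ y < x) := fun ⟨hoy, hyx⟩ =>
      gap y hoy hyx ((hP.nbr_edgeAt_iff (hyx.trans hxltc) hc).1 hj.symm)
    rw [keyW_edgeAt (by omega) hc, keyW_edgeAt (by omega) hc] at hlt ⊢
    split_ifs at hlt ⊢ <;> omega

theorem consec_of_straddle {o : ℕ} (ho : o < n) (hxc : ArcAdj (arcs P a) x c)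
    (hco : ArcAdj (arcs P a) c o) (least : ∀ y < x, ¬ ArcAdj (arcs P a) y c)
    (greatest : ∀ y, o < y → ¬ ArcAdj (arcs P a) c y) :
    Consec P (edgeAt a c) (edgeAt a o) (edgeAt a x) := by
  have hxltc := (hP.isArcDiagram_arcs a).lt_of_adj hxc
  have hclto := (hP.isArcDiagram_arcs a).lt_of_adj hco
  refine ⟨(hP.nbr_edgeAt_iff hclto ho).2 hco,
    ((hP.nbr_edgeAt_iff hxltc (hclto.trans ho)).2 hxc).symm, ?_, fun {j} hj hlt => ?_⟩
  · rw [keyW_edgeAt (by omega) (by omega), keyW_edgeAt (by omega) (by omega)]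
    split_ifs <;> omega
  · obtain ⟨y, hy, rfl⟩ : ∃ y < n, edgeAt a y = j := ⟨_, corner_lt a j, edgeAt_corner a j⟩
    have hlow : ¬ y < x := fun hyx =>
      least y hyx ((hP.nbr_edgeAt_iff (hyx.trans hxltc) (hclto.trans ho)).1 hj.symm)
    have hhigh : ¬ o < y := fun hoy =>
      greatest y hoy ((hP.nbr_edgeAt_iff (hclto.trans hoy) hy).1 hj)
    rw [keyW_edgeAt (by omega) (by omega), keyW_edgeAt (by omega) (by omega)] at hlt ⊢
    split_ifs at hlt ⊢ <;> omega

end IsDissection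

theorem Consec.exists_cell (hP : IsDissection P) (hc : Consec P e j₁ j₂) :
    ∃ y h, 0 < y ∧ y < h ∧ h < n ∧ edgeAt (j₁ + 2) y = j₂ ∧ edgeAt (j₁ + 2) h = e ∧
      ArcAdj (arcs P (j₁ + 2)) y h ∧ ArcAdj (arcs P (j₁ + 2)) 0 h ∧
      ∀ t, 0 < t → t < y → ¬ ArcAdj (arcs P (j₁ + 2)) t h := by
  set a := j₁ + 2
  have hj₁ : edgeAt a 0 = j₁ := edgeAt_zero j₁
  obtain ⟨y, hyn, hy⟩ : ∃ y < n, edgeAt a y = j₂ := ⟨_, corner_lt a j₂, edgeAt_corner a j₂⟩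
  obtain ⟨h, hhn, hh⟩ : ∃ h < n, edgeAt a h = e := ⟨_, corner_lt a e, edgeAt_corner a e⟩
  obtain ⟨hleft, hright, hlt, hgap⟩ := hc
  rw [← hh, ← hj₁] at hleft hgap hlt
  rw [← hh, ← hy] at hright
  rw [← hy] at hgap hlt
  have hpos : 0 < h := Nat.pos_of_ne_zero fun h0 => hP.not_nbr_self _ (h0 ▸ hleft)
  rw [keyW_edgeAt hyn hhn, keyW_edgeAt (by omega) hhn, if_pos hpos] at hlt
  have hyh : y < h := by split_ifs at hlt <;> omega
  rw [if_pos hyh] at hlt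
  refine ⟨y, h, by omega, hyh, hhn, hy, hh, (hP.nbr_edgeAt_iff hyh hhn).1 hright.symm,
    (hP.nbr_edgeAt_iff hpos hhn).1 hleft.symm, fun t ht hty hadj => ?_⟩
  have hkey := hgap ((hP.nbr_edgeAt_iff (hty.trans hyh) hhn).2 hadj).symm
  rw [keyW_edgeAt hyn hhn, keyW_edgeAt (by omega) hhn, keyW_edgeAt (by omega) hhn, if_pos hyh,
    if_pos (by omega), if_pos hpos] at hkey
  omega

end Dissections

section Spokes

variable {k n s : ℕ} {P : Fin k → ZMod n × ZMod n} {i : Fin k} {e j j₁ j₂ : ZMod n}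
  {q : Fin s → Fin k} {t : ℕ}

theorem Joins.unique {j' : ZMod n} (h : Joins P i e j) (h' : Joins P i e j') : j = j' :=
  Sym2.congr_right.1 (Eq.trans (Eq.symm h) h')

theorem Joins.incidentE (h : Joins P i e j) : IncidentE (P i) e :=
  (Sym2.eq_iff.1 h).imp And.left And.right

theorem joins_otherEnd (h : IncidentE (P i) e) : Joins P i e (otherEnd (P i) e) := by
  unfold otherEnd
  split_ifs with h₁
  · rw [Joins, h₁]
  · rw [Joins, h.resolve_left h₁, Sym2.eq_swap]

/-- The neighbours of `e` in the order opposite to the cyclic one: first the side `e - 1`, then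
the ends of the propagators `q 0, …, q (s - 1)` incident to `e`, and finally the side `e + 1`. -/
def spokeEnd (P : Fin k → ZMod n × ZMod n) (e : ZMod n) (q : Fin s → Fin k) : ℕ → ZMod n
  | 0 => e - 1
  | t + 1 => if h : t < s then otherEnd (P (q ⟨t, h⟩)) e else e + 1

/-- The coefficient at the vertex `e` of the relation contributed by the `t`-th neighbour of the
edge `e`; the side `e - 1` contributes `z e = 0`, and the side `e + 1` contributes
`z (e + 1) = 0`. -/
noncomputable def spokeLeft (e : ZMod n) (q : Fin s → Fin k) : ℕ → WR k n
  | 0 => 1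
  | t + 1 => if h : t < s then X (q ⟨t, h⟩, e) else 0

/-- The coefficient at the vertex `e + 1` of the relation contributed by the `t`-th neighbour of
the edge `e`, as in `spokeLeft`. -/
noncomputable def spokeRight (e : ZMod n) (q : Fin s → Fin k) : ℕ → WR k n
  | 0 => 0
  | t + 1 => if h : t < s then X (q ⟨t, h⟩, e + 1) else 1

/-- The factor of `R_e` belonging to the gap between the `t`-th and the `(t + 1)`-st neighbour
of the edge `e`: the determinant of the two relations they contribute. -/
noncomputable def gapFactor (e : ZMod n) (q : Fin s → Fin k) (t : ℕ) : WR k n :=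
  spokeLeft e q t * spokeRight e q (t + 1) - spokeRight e q t * spokeLeft e q (t + 1)

theorem gapFactor_zero (hs : 0 < s) (e : ZMod n) (q : Fin s → Fin k) :
    gapFactor e q 0 = X (q ⟨0, hs⟩, e + 1) := by
  simp only [gapFactor, spokeLeft, spokeRight, dif_pos hs, one_mul, zero_mul, sub_zero]

theorem gapFactor_succ (ht : t + 1 < s) (e : ZMod n) (q : Fin s → Fin k) :
    gapFactor e q (t + 1) =
      X (q ⟨t, Nat.lt_of_succ_lt ht⟩, e) * X (q ⟨t + 1, ht⟩, e + 1) -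
        X (q ⟨t, Nat.lt_of_succ_lt ht⟩, e + 1) * X (q ⟨t + 1, ht⟩, e) := by
  simp only [gapFactor, spokeLeft, spokeRight, dif_pos ht, dif_pos (Nat.lt_of_succ_lt ht)]

theorem gapFactor_last (e : ZMod n) (q : Fin (t + 1) → Fin k) :
    gapFactor e q (t + 1) = X (q ⟨t, t.lt_succ_self⟩, e) := by
  simp only [gapFactor, spokeLeft, spokeRight, dif_pos t.lt_succ_self, lt_irrefl, dite_false,
    mul_one, mul_zero, sub_zero]

theorem Redge_eq_prod_gapFactor (e : ZMod n) (q : Fin s → Fin k) :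
    Redge k n e s q = ∏ t ∈ Finset.range (s + 1), gapFactor e q t := by
  obtain _ | m := s
  · simp [Redge, gapFactor, spokeLeft, spokeRight]
  · rw [Finset.prod_range_succ, Finset.prod_range_succ', Finset.prod_range,
      gapFactor_zero m.succ_pos, gapFactor_last,
      Finset.prod_congr rfl fun t _ => gapFactor_succ (Nat.succ_lt_succ t.2) e q, Redge,
      dif_neg m.succ_ne_zero, mul_comm (∏ t : Fin m, _)]
    rfl

theorem gapFactor_dvd_Redge (e : ZMod n) (q : Fin s → Fin k) (ht : t ≤ s) :
    gapFactor e q t ∣ Redge k n e s q := by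
  rw [Redge_eq_prod_gapFactor]
  exact Finset.dvd_prod_of_mem _ (Finset.mem_range_succ_iff.2 ht)

theorem spokeEnd_succ_of_lt (ht : t < s) :
    spokeEnd P e q (t + 1) = otherEnd (P (q ⟨t, ht⟩)) e :=
  dif_pos ht

theorem spokeEnd_last : spokeEnd P e q (s + 1) = e + 1 :=
  dif_neg (lt_irrefl s)

theorem nbr_spokeEnd (hq : EnumIncident P e s q) (t : ℕ) : Nbr P e (spokeEnd P e q t) := by
  obtain _ | t := t
  · exact .inr (.inl (sub_add_cancel e 1).symm)
  · rw [spokeEnd]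
    split_ifs with ht
    · exact .inr (.inr ⟨_, joins_otherEnd (hq.2.1 _)⟩)
    · exact .inl rfl

theorem Nbr.exists_spokeEnd (hq : EnumIncident P e s q) (hj : Nbr P e j) :
    ∃ t ≤ s + 1, spokeEnd P e q t = j := by
  rcases hj with rfl | rfl | ⟨i, hi⟩
  · exact ⟨s + 1, le_rfl, spokeEnd_last⟩
  · exact ⟨0, Nat.zero_le _, add_sub_cancel_right j 1⟩
  · obtain ⟨r, rfl⟩ := hq.2.2.1 i hi.incidentE
    exact ⟨r + 1, by omega, (spokeEnd_succ_of_lt r.2).trans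
      ((joins_otherEnd hi.incidentE).unique hi)⟩

theorem keyW_add_one_pos_of_joins (hP : IsDissection P) (h : Joins P i e j) :
    0 < keyW (e + 1) j :=
  ZMod.val_pos.2 (sub_ne_zero.2 (hP.far h).2)

/-- The vector `z` vanishes at both vertices of the edge `e`. -/
def VanishesAt {F : Type*} [Zero F] (z : ZMod n → F) (e : ZMod n) : Prop := z e = 0 ∧ z (e + 1) = 0

variable {F : Type*} [CommRing F] {φ : WR k n →+* F} {z : ZMod n → F}

/-- The relation between the two entries of `z` on the edge `e` contributed by its `t`-th
neighbour, with coefficients specialized along `φ`. -/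
def SpokeRel (φ : WR k n →+* F) (e : ZMod n) (q : Fin s → Fin k) (z : ZMod n → F) (t : ℕ) : Prop :=
  φ (spokeLeft e q t) * z e + φ (spokeRight e q t) * z (e + 1) = 0

theorem spokeRel_zero (hz : VanishesAt z (spokeEnd P e q 0)) : SpokeRel φ e q z 0 := by
  have he : z e = 0 := by simpa only [spokeEnd, sub_add_cancel] using hz.2
  simp only [SpokeRel, spokeLeft, spokeRight, he, map_zero, mul_zero, zero_mul, add_zero]

theorem spokeRel_last (hz : VanishesAt z (spokeEnd P e q (s + 1))) :
    SpokeRel φ e q z (s + 1) := by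
  have he : z (e + 1) = 0 := spokeEnd_last (P := P) (q := q) ▸ hz.1
  simp only [SpokeRel, spokeLeft, lt_irrefl, dite_false, he, map_zero, mul_zero, zero_mul,
    add_zero]

theorem vanishesAt_of_spokeRel [IsDomain F] (h : SpokeRel φ e q z t)
    (h' : SpokeRel φ e q z (t + 1)) (hgap : φ (gapFactor e q t) ≠ 0) : VanishesAt z e := by
  simp only [gapFactor, map_sub, map_mul] at hgap
  unfold SpokeRel at h h'
  constructor <;> refine (mul_eq_zero.1 ?_).resolve_left hgap <;> grind

theorem spokeRel_of_gapFactor_eq_zero [IsDomain F] (hgap : φ (gapFactor e q t) = 0)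
    (h : SpokeRel φ e q z (t + 1)) (hne : φ (spokeRight e q (t + 1)) ≠ 0) :
    SpokeRel φ e q z t := by
  simp only [gapFactor, map_sub, map_mul] at hgap
  unfold SpokeRel at h ⊢
  refine (mul_eq_zero.1 ?_).resolve_left hne
  linear_combination φ (spokeRight e q t) * h + z e * hgap

theorem spokeRel_one_of_gapFactor_eq_zero (hgap : φ (gapFactor e q 0) = 0)
    (h : SpokeRel φ e q z 0) : SpokeRel φ e q z 1 := by
  simp only [gapFactor, spokeLeft, spokeRight, one_mul, zero_mul, sub_zero] at hgap
  simp only [SpokeRel, spokeLeft, spokeRight, map_one, map_zero, one_mul, zero_mul,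
    add_zero] at h ⊢
  rw [h, hgap, mul_zero, zero_mul, add_zero]

variable [NeZero n]

theorem keyW_lt_keyW_sub_one (hP : IsDissection P) (hj : j ≠ e) (hj' : e ≠ j + 1) :
    keyW (e + 1) j < keyW (e + 1) (e - 1) := by
  have := hP.three_le
  have he : edgeAt (e + 2) 0 = e := edgeAt_zero e
  have he' : edgeAt (e + 2) 1 = e - 1 :=
    eq_sub_of_add_eq ((edgeAt_succ_add_one _ 0).trans he)
  obtain ⟨y, hy, rfl⟩ : ∃ y < n, edgeAt (e + 2) y = j := ⟨_, corner_lt _ j, edgeAt_corner _ j⟩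
  have hy₀ : y ≠ 0 := fun h => hj (h ▸ he)
  have hy₁ : y ≠ 1 := fun h => hj' (by rw [h, he', sub_add_cancel])
  have hkey := keyW_edgeAt (a := e + 2) hy (by omega : 0 < n)
  have hkey' := keyW_edgeAt (a := e + 2) (by omega : 1 < n) (by omega : 0 < n)
  rw [he, if_neg (by omega)] at hkey hkey'
  rw [hkey, ← he', hkey']
  omega

theorem strictAntiOn_keyW_spokeEnd (hP : IsDissection P) (hq : EnumIncident P e s q) :
    StrictAntiOn (fun t => keyW (e + 1) (spokeEnd P e q t)) (Set.Iic (s + 1)) := by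
  have hjoin := fun r => joins_otherEnd (hq.2.1 r)
  refine strictAntiOn_Iic_of_succ_lt fun t ht => ?_
  obtain _ | t := t <;> simp only [Order.succ_eq_add_one]
  · refine keyW_lt_keyW_sub_one hP (fun h => hP.not_nbr_self e ?_) ?_
    · have := nbr_spokeEnd hq (0 + 1)
      rwa [h] at this
    · obtain rfl | hs := s.eq_zero_or_pos
      · rw [spokeEnd_last, add_assoc, Ne, left_eq_add, one_add_one_eq_two]
        intro h
        have := Nat.le_of_dvd two_pos ((ZMod.natCast_eq_zero_iff 2 n).1 (by exact_mod_cast h))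
        have := hP.three_le
        omega
      · rw [spokeEnd_succ_of_lt hs]
        exact (hP.far (hjoin _).symm).2
  · have hts := Nat.lt_of_succ_lt_succ ht
    rw [spokeEnd_succ_of_lt hts]
    obtain hlt | rfl := (Nat.succ_le_of_lt hts).lt_or_eq
    · rw [spokeEnd_succ_of_lt hlt]
      exact hq.2.2.2 _ _ (Fin.mk_lt_mk.2 t.lt_succ_self)
    · rw [spokeEnd_last, keyW, sub_self, ZMod.val_zero]
      exact keyW_add_one_pos_of_joins hP (hjoin _)

theorem consec_spokeEnd (hP : IsDissection P) (hq : EnumIncident P e s q) (ht : t ≤ s) :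
    Consec P e (spokeEnd P e q t) (spokeEnd P e q (t + 1)) := by
  have hanti := strictAntiOn_keyW_spokeEnd hP hq
  have hmem : t + 1 ∈ Set.Iic (s + 1) := Nat.succ_le_succ ht
  have hmem' : t ∈ Set.Iic (s + 1) := Nat.le_succ_of_le ht
  refine ⟨nbr_spokeEnd hq t, nbr_spokeEnd hq _, hanti hmem' hmem t.lt_succ_self,
    fun {j} hj hlt => ?_⟩
  obtain ⟨r, hr, rfl⟩ := hj.exists_spokeEnd hq
  exact (hanti.le_iff_ge hmem' hr).2 (Nat.le_of_lt_succ ((hanti.lt_iff_gt hmem hr).1 hlt))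

theorem Consec.exists_spokeEnd (hP : IsDissection P) (hq : EnumIncident P e s q)
    (h : Consec P e j₁ j₂) : ∃ t ≤ s, spokeEnd P e q t = j₁ ∧ spokeEnd P e q (t + 1) = j₂ := by
  have hanti := strictAntiOn_keyW_spokeEnd hP hq
  obtain ⟨t, ht, rfl⟩ := h.nbr_left.exists_spokeEnd hq
  obtain ⟨r, hr, rfl⟩ := h.nbr_right.exists_spokeEnd hq
  have htr : t < r := (hanti.lt_iff_gt hr ht).1 h.key_lt
  have hmem : t + 1 ∈ Set.Iic (s + 1) := (Nat.succ_le_of_lt htr).trans hr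
  refine ⟨t, Nat.le_of_succ_le_succ hmem, rfl, congrArg _ (le_antisymm htr ?_)⟩
  by_contra! hlt
  exact (h.gap (nbr_spokeEnd hq (t + 1)) (hanti hmem hr hlt)).not_gt
    (hanti ht hmem t.lt_succ_self)

open Matrix

theorem mulVec_MWpoly_apply (hP : IsDissection P) (φ : WR k n →+* F) (z : ZMod n → F)
    (h : Joins P i e j) :
    ((MWpoly k n P).map φ *ᵥ z) i = φ (X (i, e)) * z e + φ (X (i, e + 1)) * z (e + 1) +
      (φ (X (i, j)) * z j + φ (X (i, j + 1)) * z (j + 1)) := by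
  have : Fact (1 < n) := ⟨hP.one_lt⟩
  have hdisj : Disjoint ({e, e + 1} : Finset (ZMod n)) {j, j + 1} := by
    obtain ⟨h₁, h₂⟩ := hP.far h
    simp only [Finset.disjoint_insert_left, Finset.disjoint_singleton_left, Finset.mem_insert,
      Finset.mem_singleton, not_or, add_left_inj]
    exact ⟨⟨h₁.symm, (hP.far h.symm).2⟩, h₂.symm, h₁.symm⟩
  have hne : ∀ x : ZMod n, x ≠ x + 1 := fun x => by simp
  have hterm : ∀ v, ((MWpoly k n P).map φ) i v * z v =
      if v ∈ propSupp (P i) then φ (X (i, v)) * z v else 0 := fun v => by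
    rw [Matrix.map_apply, MWpoly, Matrix.of_apply]
    split_ifs <;> simp
  rw [Matrix.mulVec, dotProduct, Finset.sum_congr rfl fun v _ => hterm v, Finset.sum_ite_mem,
    Finset.univ_inter, propSupp_eq_of_joins h, Finset.sum_union hdisj, Finset.sum_pair (hne e),
    Finset.sum_pair (hne j)]

theorem mulVec_eq_zero_iff_spokeRel (hP : IsDissection P) (hq : EnumIncident P e s q)
    (ht : t < s) (hz : VanishesAt z (spokeEnd P e q (t + 1))) :
    ((MWpoly k n P).map φ *ᵥ z) (q ⟨t, ht⟩) = 0 ↔ SpokeRel φ e q z (t + 1) := by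
  rw [spokeEnd_succ_of_lt ht] at hz
  rw [mulVec_MWpoly_apply hP φ z (joins_otherEnd (hq.2.1 _)), hz.1, hz.2, mul_zero, mul_zero,
    add_zero, add_zero, SpokeRel, spokeLeft, spokeRight, dif_pos ht, dif_pos ht]

theorem spokeRel_of_mulVec_eq_zero (hP : IsDissection P) (hq : EnumIncident P e s q)
    (hM : (MWpoly k n P).map φ *ᵥ z = 0) (ht : t ≤ s + 1)
    (hz : VanishesAt z (spokeEnd P e q t)) : SpokeRel φ e q z t := by
  obtain _ | t := t
  · exact spokeRel_zero hz
  obtain hts | rfl := (Nat.le_of_succ_le_succ ht).lt_or_eq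
  · exact (mulVec_eq_zero_iff_spokeRel hP hq hts hz).1 (congrFun hM _)
  · exact spokeRel_last hz

theorem Consec.vanishesAt [IsDomain F] (hP : IsDissection P) (hq : EnumIncident P e s q)
    (hφ : φ (Redge k n e s q) ≠ 0) (hM : (MWpoly k n P).map φ *ᵥ z = 0) (h : Consec P e j₁ j₂)
    (h₁ : VanishesAt z j₁) (h₂ : VanishesAt z j₂) : VanishesAt z e := by
  obtain ⟨t, ht, rfl, rfl⟩ := h.exists_spokeEnd hP hq
  refine vanishesAt_of_spokeRel (spokeRel_of_mulVec_eq_zero hP hq hM (Nat.le_succ_of_le ht) h₁)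
    (spokeRel_of_mulVec_eq_zero hP hq hM (Nat.succ_le_succ ht) h₂) fun h0 => hφ ?_
  exact zero_dvd_iff.1 (h0 ▸ map_dvd φ (gapFactor_dvd_Redge e q ht))

end Spokes

section Coprimality

section Quadric

variable {σ R : Type*} {a b c d : σ}

theorem vars_X_mul_X [CommSemiring R] [Nontrivial R] [DecidableEq σ] (a b : σ) :
    (X a * X b : MvPolynomial σ R).vars = {a, b} := by
  rw [X, X, monomial_mul, mul_one, vars_monomial one_ne_zero]
  ext u
  by_cases ha : u = a <;> by_cases hb : u = b <;> simp [Finsupp.single_apply, ha, hb]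

theorem vars_X_mul_X_sub_X_mul_X [CommRing R] [Nontrivial R] [DecidableEq σ] (hac : a ≠ c)
    (had : a ≠ d) (hbc : b ≠ c) (hbd : b ≠ d) :
    (X a * X b - X c * X d : MvPolynomial σ R).vars = {a, b} ∪ {c, d} := by
  have hdisj : Disjoint ({a, b} : Finset σ) {c, d} := by
    simp [hac.symm, had.symm, hbc.symm, hbd.symm]
  rw [vars_sub_of_disjoint] <;> simp only [vars_X_mul_X, hdisj]

theorem irreducible_X_mul_X_sub_X_mul_X [CommRing R] [IsDomain R] (hab : a ≠ b) (hac : a ≠ c)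
    (had : a ≠ d) (hbc : b ≠ c) (hbd : b ≠ d) :
    Irreducible (X a * X b - X c * X d : MvPolynomial σ R) := by
  classical
  rw [sub_eq_add_neg]
  refine irreducible_mul_X_add _ _ b (X_ne_zero a) (by simp [hab.symm]) ?_ ?_
  · rw [vars_neg, vars_X_mul_X]
    simp [hbc, hbd]
  · rw [X_prime.irreducible.isRelPrime_iff_not_dvd, dvd_neg, X_prime.dvd_mul, X_dvd_X, X_dvd_X]
    simp [hac, had]

theorem vars_eq_of_associated [CommRing R] [IsDomain R] {f g : MvPolynomial σ R}
    (h : Associated f g) : f.vars = g.vars := by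
  obtain ⟨u, rfl⟩ := h
  obtain ⟨r, hr, hu⟩ := isUnit_iff_eq_C_of_isReduced.1 u.isUnit
  rw [hu, mul_comm, vars_C_mul _ hr.ne_zero]

end Quadric

variable {k n s s' : ℕ} {P : Fin k → ZMod n × ZMod n} {e e' : ZMod n} {q : Fin s → Fin k}
  {q' : Fin s' → Fin k} {t t' : ℕ}

theorem irreducible_gapFactor (hn : 1 < n) (hq : Function.Injective q) (hs : s ≠ 0)
    (ht : t ≤ s) : Irreducible (gapFactor e q t) := by
  have : Fact (1 < n) := ⟨hn⟩
  obtain _ | t := t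
  · exact gapFactor_zero (Nat.pos_of_ne_zero hs) e q ▸ X_prime.irreducible
  obtain hlt | rfl := ht.lt_or_eq
  · rw [gapFactor_succ hlt]
    apply irreducible_X_mul_X_sub_X_mul_X <;> simp [hq.eq_iff]
  · exact gapFactor_last e q ▸ X_prime.irreducible

theorem mem_vars_gapFactor (hn : 1 < n) (hq : Function.Injective q) (ht : t ≤ s) {i : Fin k}
    {v : ZMod n} : (i, v) ∈ (gapFactor e q t).vars ↔
      (v = e ∧ 0 < t ∨ v = e + 1 ∧ t < s) ∧ ∃ r, ∃ hr : r < s, (t = r ∨ t = r + 1) ∧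
        i = q ⟨r, hr⟩ := by
  have : Fact (1 < n) := ⟨hn⟩
  obtain _ | t := t
  · obtain rfl | hs := s.eq_zero_or_pos
    · simp [gapFactor, spokeLeft, spokeRight]
    · rw [gapFactor_zero hs, vars_X, Finset.mem_singleton, Prod.mk.injEq]
      grind
  obtain hlt | rfl := ht.lt_or_eq
  · rw [gapFactor_succ hlt, vars_X_mul_X_sub_X_mul_X]
    · simp only [Finset.mem_union, Finset.mem_insert, Finset.mem_singleton, Prod.mk.injEq]
      grind
    all_goals simp [hq.eq_iff]
  · rw [gapFactor_last, vars_X, Finset.mem_singleton, Prod.mk.injEq]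
    grind

theorem mem_vars_gapFactor_row (hn : 1 < n) (hq : Function.Injective q) (ht : t ≤ s) {r : Fin s}
    {v : ZMod n} : (q r, v) ∈ (gapFactor e q t).vars ↔
      (v = e ∧ 0 < t ∨ v = e + 1 ∧ t < s) ∧ (t = r ∨ t = r + 1) := by
  rw [mem_vars_gapFactor hn hq ht]
  refine and_congr_right fun _ => ⟨?_, fun h => ⟨r, r.2, h, rfl⟩⟩
  rintro ⟨r', hr', h, hrr'⟩
  rwa [hq hrr']

theorem gapFactor_vars_ne_of_lt (hn : 1 < n) (hq : Function.Injective q) (htt' : t < t')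
    (ht' : t' ≤ s) : (gapFactor e q t).vars ≠ (gapFactor e q t').vars := by
  have : Fact (1 < n) := ⟨hn⟩
  have he : e ≠ e + 1 := by simp
  intro h
  have hmem := fun r hr v => Finset.ext_iff.1 h (q ⟨r, hr⟩, v)
  simp only [mem_vars_gapFactor_row hn hq (htt'.le.trans ht'),
    mem_vars_gapFactor_row hn hq ht'] at hmem
  have hsucc : t' = t + 1 := by
    have := hmem (t' - 1) (by omega) e
    grind
  have hlt : t' < s := by
    have := hmem t (by omega) (e + 1)
    grind
  have := hmem t' hlt e
  grind

theorem edge_eq_of_gapFactor_vars_eq (hP : IsDissection P) (hq : EnumIncident P e s q)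
    (hq' : EnumIncident P e' s' q') (hs : s ≠ 0) (ht : t ≤ s) (ht' : t' ≤ s')
    (h : (gapFactor e q t).vars = (gapFactor e' q' t').vars) : e = e' := by
  have hn := hP.one_lt
  by_contra hne
  obtain ⟨r, v, hv⟩ : ∃ r : Fin s, ∃ v, (q r, v) ∈ (gapFactor e q t).vars := by
    obtain hts | rfl := ht.lt_or_eq
    · exact ⟨⟨t, hts⟩, e + 1, (mem_vars_gapFactor_row hn hq.1 ht).2 ⟨.inr ⟨rfl, hts⟩, .inl rfl⟩⟩
    · exact ⟨⟨t - 1, by omega⟩, e, (mem_vars_gapFactor_row hn hq.1 ht).2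
        ⟨.inl ⟨rfl, by omega⟩, .inr (by grind)⟩⟩
  have hv' := hv
  rw [h, mem_vars_gapFactor hn hq'.1 ht'] at hv'
  obtain ⟨hcol', r', hr', -, hrr'⟩ := hv'
  have hcol := ((mem_vars_gapFactor_row hn hq.1 ht).1 hv).1
  have hjoin : Joins P (q r) e e' := by
    have he := hq.2.1 r
    have he' := hrr' ▸ hq'.2.1 ⟨r', hr'⟩
    unfold IncidentE at he he'
    exact Sym2.eq_iff.2 (by grind)
  have hfar := hP.far hjoin
  have hfar' := hP.far hjoin.symm
  grind

theorem isUnit_gapFactor (hs : s = 0) (e : ZMod n) (q : Fin s → Fin k) :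
    IsUnit (gapFactor e q 0) := by
  subst hs
  simp [gapFactor, spokeLeft, spokeRight]

theorem gapFactor_ne_zero (hn : 1 < n) (hq : Function.Injective q) (ht : t ≤ s) :
    gapFactor e q t ≠ 0 := by
  by_cases hs : s = 0
  · obtain rfl : t = 0 := by omega
    exact (isUnit_gapFactor hs e q).ne_zero
  · exact (irreducible_gapFactor hn hq hs ht).ne_zero

theorem Redge_ne_zero (hn : 1 < n) (hq : Function.Injective q) : Redge k n e s q ≠ 0 := by
  rw [Redge_eq_prod_gapFactor]
  exact Finset.prod_ne_zero_iff.2 fun t ht =>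
    gapFactor_ne_zero hn hq (Finset.mem_range_succ_iff.1 ht)

theorem algebraMap_Redge_ne_zero (hP : IsDissection P) (hq : EnumIncident P e s q) :
    algebraMap (WR k n) (WF k n) (Redge k n e s q) ≠ 0 :=
  (FaithfulSMul.algebraMap_eq_zero_iff _ _).not.2
    (Redge_ne_zero hP.one_lt hq.1)

variable {S : ZMod n → ℕ} {Q : ∀ e : ZMod n, Fin (S e) → Fin k}

theorem isRelPrime_gapFactor (hP : IsDissection P) (hQ : ∀ e, EnumIncident P e (S e) (Q e))
    (ht : t ≤ S e) (ht' : t' ≤ S e') (hne : e = e' → t ≠ t') :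
    IsRelPrime (gapFactor e (Q e) t) (gapFactor e' (Q e') t') := by
  have hn := hP.one_lt
  by_cases hs : S e = 0
  · obtain rfl : t = 0 := by omega
    exact (isUnit_gapFactor hs e _).isRelPrime_left
  by_cases hs' : S e' = 0
  · obtain rfl : t' = 0 := by omega
    exact (isUnit_gapFactor hs' e' _).isRelPrime_right
  have hirr := irreducible_gapFactor (e := e) hn (hQ e).1 hs ht
  rw [hirr.isRelPrime_iff_not_dvd]
  intro hdvd
  have hvars := vars_eq_of_associated
    (hirr.associated_of_dvd (irreducible_gapFactor hn (hQ e').1 hs' ht') hdvd)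
  obtain rfl := edge_eq_of_gapFactor_vars_eq hP (hQ e) (hQ e') hs ht ht' hvars
  rcases (hne rfl).lt_or_gt with hlt | hlt
  · exact gapFactor_vars_ne_of_lt hn (hQ e).1 hlt ht' hvars
  · exact gapFactor_vars_ne_of_lt hn (hQ e).1 hlt ht hvars.symm

theorem prod_Redge_dvd [NeZero n] (hP : IsDissection P)
    (hQ : ∀ e, EnumIncident P e (S e) (Q e)) {g : WR k n}
    (h : ∀ e, S e ≠ 0 → ∀ t ≤ S e, gapFactor e (Q e) t ∣ g) :
    ∏ e, Redge k n e (S e) (Q e) ∣ g := by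
  simp only [Redge_eq_prod_gapFactor]
  refine Fintype.prod_dvd_of_isRelPrime (fun e e' hee' => ?_) fun e => ?_
  · exact IsRelPrime.prod_left fun t ht => IsRelPrime.prod_right fun t' ht' =>
      isRelPrime_gapFactor hP hQ (Finset.mem_range_succ_iff.1 ht)
        (Finset.mem_range_succ_iff.1 ht') fun h => absurd h hee'
  · refine Finset.prod_dvd_of_isRelPrime (fun t ht t' ht' htt' => ?_) fun t ht => ?_
    · exact isRelPrime_gapFactor hP hQ (Finset.mem_range_succ_iff.1 ht)
        (Finset.mem_range_succ_iff.1 ht') fun _ => htt'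
    · rw [Finset.mem_range_succ_iff] at ht
      by_cases hs : S e = 0
      · obtain rfl : t = 0 := by omega
        exact (isUnit_gapFactor hs e _).dvd
      · exact h e hs t ht

theorem gapFactor_succ_not_dvd_spokeRight (hn : 1 < n) (e : ZMod n) (q : Fin s → Fin k) (t : ℕ) :
    ¬ gapFactor e q (t + 1) ∣ spokeRight e q (t + 2) := by
  have : Fact (1 < n) := ⟨hn⟩
  let θ : WR k n →+* ℝ := eval fun u => if u.2 = e then 0 else 1
  have hleft : ∀ r, θ (spokeLeft e q (r + 1)) = 0 := fun r => by
    rw [spokeLeft]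
    split_ifs <;> simp [θ]
  have hright : θ (spokeRight e q (t + 2)) = 1 := by
    rw [spokeRight]
    split_ifs <;> simp [θ]
  intro h
  have := map_dvd θ h
  rw [hright, gapFactor, map_sub, map_mul, map_mul, hleft, hleft, zero_mul, mul_zero, sub_zero,
    zero_dvd_iff] at this
  exact one_ne_zero this

end Coprimality

section LinearAlgebra

open Matrix

variable {ι κ ι' κ' F : Type*} [Fintype κ] [Fintype κ']

/-- The vector `z` is supported on the set `S`. -/
def SupportedOn [Zero F] (z : κ → F) (S : Finset κ) : Prop := ∀ v ∉ S, z v = 0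

theorem submatrix_mulVec_comp [NonUnitalNonAssocSemiring F] (A : Matrix ι κ F) (ρ : ι' → ι)
    {σ : κ' → κ} (hσ : Function.Injective σ) {z : κ → F} (hz : ∀ v ∉ Set.range σ, z v = 0) :
    A.submatrix ρ σ *ᵥ (z ∘ σ) = (A *ᵥ z) ∘ ρ := by
  funext i
  exact Fintype.sum_of_injective σ hσ _ _ (fun v hv => by rw [hz v hv, mul_zero]) fun _ => rfl

theorem exists_mulVec_eq_zero_iff_submatrix [NonUnitalNonAssocSemiring F] (A : Matrix ι κ F)
    (ρ : ι' → ι) {σ : κ' → κ} (hσ : Function.Injective σ) :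
    (∃ w ≠ 0, A.submatrix ρ σ *ᵥ w = 0) ↔
      ∃ z ≠ 0, (∀ v ∉ Set.range σ, z v = 0) ∧ (A *ᵥ z) ∘ ρ = 0 := by
  constructor
  · rintro ⟨w, hw, hAw⟩
    have hz : ∀ v ∉ Set.range σ, Function.extend σ w (0 : κ → F) v = 0 := fun v hv =>
      Function.extend_apply' w (0 : κ → F) v hv
    have hcomp : Function.extend σ w (0 : κ → F) ∘ σ = w := Function.extend_comp hσ w _
    refine ⟨Function.extend σ w 0, fun h => hw ?_, hz, ?_⟩
    · rw [← hcomp, h]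
      rfl
    · rw [← submatrix_mulVec_comp A ρ hσ hz, hcomp, hAw]
  · rintro ⟨z, hz, hsupp, hAz⟩
    refine ⟨z ∘ σ, fun h => hz (funext fun v => ?_), ?_⟩
    · by_cases hv : v ∈ Set.range σ
      · obtain ⟨u, rfl⟩ := hv
        exact congrFun h u
      · exact hsupp v hv
    · rw [submatrix_mulVec_comp A ρ hσ hsupp, hAz]

theorem exists_mulVec_eq_zero_of_card_lt [Field F] (A : Matrix ι κ F) {T : Finset ι}
    {S : Finset κ} (h : T.card < S.card) :
    ∃ z ≠ 0, SupportedOn z S ∧ ∀ i ∈ T, (A *ᵥ z) i = 0 := by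
  have hker : LinearMap.ker (A.submatrix ((↑) : T → ι) ((↑) : S → κ)).mulVecLin ≠ ⊥ :=
    LinearMap.ker_ne_bot_of_finrank_lt (by simpa using h)
  obtain ⟨w, hw, hw₀⟩ := Submodule.exists_mem_ne_zero_of_ne_bot hker
  obtain ⟨z, hz, hsupp, hAz⟩ :=
    (exists_mulVec_eq_zero_iff_submatrix A _ Subtype.val_injective).1 ⟨w, hw₀, hw⟩
  exact ⟨z, hz, fun v hv => hsupp v (by simpa using hv), fun i hi => congrFun hAz ⟨i, hi⟩⟩

theorem map_minorW_eq_zero_iff {k n : ℕ} [NeZero n] {P : Fin k → ZMod n × ZMod n}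
    {S : Finset (ZMod n)} [CommRing F] [IsDomain F] (φ : WR k n →+* F) (hS : S.card = k) :
    φ (minorW k n P S) = 0 ↔
      ∃ z ≠ 0, SupportedOn z S ∧ (MWpoly k n P).map φ *ᵥ z = 0 := by
  have hσ : Function.Injective fun i : Fin k => (S.equivFin.symm (Fin.cast hS.symm i) : ZMod n) :=
    Subtype.val_injective.comp (S.equivFin.symm.injective.comp (Fin.cast_injective _))
  have hrange : ∀ v, v ∈ Set.range (fun i : Fin k =>
      (S.equivFin.symm (Fin.cast hS.symm i) : ZMod n)) ↔ v ∈ S := fun v =>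
    ⟨by rintro ⟨i, rfl⟩; exact Subtype.coe_prop _, fun hv =>
      ⟨Fin.cast hS (S.equivFin ⟨v, hv⟩), by simp⟩⟩
  rw [minorW, dif_pos hS, RingHom.map_det, ← Matrix.exists_mulVec_eq_zero_iff]
  simp only [RingHom.mapMatrix_apply, ← submatrix_map]
  rw [exists_mulVec_eq_zero_iff_submatrix _ _ hσ]
  simp only [hrange, SupportedOn, Function.comp_id]

end LinearAlgebra

section Necklace

variable {k n : ℕ} {P : Fin k → ZMod n × ZMod n} {a b v : ZMod n} {c m t y : ℕ}

/-- The vertices at the corners after `y` that can be inferred from the corners preceding them,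
the last corner `a - 1` excluded. For `y = 0` this is the necklace element `I_a`. -/
noncomputable def freshVertices (P : Fin k → ZMod n × ZMod n) (a : ZMod n) (y : ℕ) :
    Finset (ZMod n) :=
  (freshIn (arcs P a) y (n - 2)).image (edgeAt a)

theorem edgeAt_mem_freshVertices (hc : c < n) :
    edgeAt a c ∈ freshVertices P a y ↔ c ∈ freshIn (arcs P a) y (n - 2) := by
  simp only [freshVertices, Finset.mem_image]
  refine ⟨?_, fun h => ⟨c, h, rfl⟩⟩
  rintro ⟨d, hd, hdc⟩
  have hdn : d < n := by
    rw [mem_freshIn] at hd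
    omega
  rwa [← corner_edgeAt (a := a) hc, ← hdc, corner_edgeAt hdn]

theorem freshVertices_subset (P : Fin k → ZMod n × ZMod n) (a : ZMod n) (y : ℕ) :
    freshVertices P a y ⊆ freshVertices P a 0 :=
  Finset.image_subset_image fun t ht => by
    rw [mem_freshIn] at ht ⊢
    exact ⟨by omega, ht.2⟩

theorem card_freshIn_le_card_freshVertices (P : Fin k → ZMod n × ZMod n) (a : ZMod n) (y : ℕ) :
    (freshIn (arcs P a) y (n - 1)).card ≤ (freshVertices P a y).card + 1 := by
  have hinj : Set.InjOn (edgeAt a) (freshIn (arcs P a) y (n - 2)) := fun c hc d hd hcd => by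
    rw [Finset.mem_coe, mem_freshIn] at hc hd
    rw [← corner_edgeAt (a := a) (by omega : c < n), hcd, corner_edgeAt (by omega)]
  have hsub : freshIn (arcs P a) y (n - 1) ⊆ insert (n - 1) (freshIn (arcs P a) y (n - 2)) :=
    fun t ht => by
      rw [Finset.mem_insert]
      rw [mem_freshIn] at ht ⊢
      exact or_iff_not_imp_left.2 fun hne => ⟨by omega, ht.2⟩
  grw [freshVertices, Finset.card_image_of_injOn hinj, hsub, Finset.card_insert_le]

theorem keyW_edgeAt_self (hc : c < n) :
    keyW a (edgeAt a c) = if c < n - 1 then n - 2 - c else n - 1 := by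
  have ha : edgeAt a (n - 1) + 1 = a := by
    rw [edgeAt, Nat.cast_sub (by omega), ZMod.natCast_self]
    ring
  have hkey := keyW_edgeAt (a := a) hc (by omega : n - 1 < n)
  rw [ha] at hkey
  split_ifs at hkey ⊢ <;> omega

variable [NeZero n]

theorem IsDissection.le_card_freshVertices (hP : IsDissection P) (a : ZMod n) :
    k ≤ (freshVertices P a 0).card := by
  have hcount := (hP.isArcDiagram_arcs a).card_le_freshIn fun _ => snd_le_of_mem_arcs
  have hmono := card_freshIn_mono (A := arcs P a) (v := n - 1) zero_le_one
  have hcard := card_freshIn_le_card_freshVertices P a 0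
  rw [hP.card_arcs a] at hcount
  omega

theorem keyW_injective (a : ZMod n) : Function.Injective (keyW a) :=
  (ZMod.val_injective n).comp sub_left_injective

theorem countP_le_of_forall₂_le {α : Type*} [Preorder α] [DecidableLE α] {l l' : List α}
    (h : List.Forall₂ (· ≤ ·) l l') (m : α) : l'.countP (· ≤ m) ≤ l.countP (· ≤ m) := by
  induction h with
  | nil => rfl
  | cons hab _ ih =>
    have hmono : _ ≤ m → _ ≤ m := hab.trans
    simp only [List.countP_cons, decide_eq_true_eq]
    split_ifs <;> first | omega | exact absurd (hmono ‹_›) ‹_›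

theorem countP_sort_image_keyW (S : Finset (ZMod n)) (a : ZMod n) (m : ℕ) :
    ((S.image (keyW a)).sort (· ≤ ·)).countP (· ≤ m) = {v ∈ S | keyW a v ≤ m}.card := by
  rw [← Multiset.coe_countP, Finset.sort_eq, Multiset.countP_eq_card_filter, ← Finset.filter_val,
    ← Finset.card_def, Finset.filter_image, Finset.card_image_of_injective _ (keyW_injective a)]

theorem GaleLEat.card_filter_le {S T : Finset (ZMod n)} (h : GaleLEat a S T) (m : ℕ) :
    {v ∈ T | keyW a v ≤ m}.card ≤ {v ∈ S | keyW a v ≤ m}.card := by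
  simpa only [countP_sort_image_keyW] using countP_le_of_forall₂_le h m

theorem GaleLEat.mem_of_agree {S T : Finset (ZMod n)} (h : GaleLEat a S T) (hb : b ∈ T)
    (agree : ∀ v, keyW a v < keyW a b → (v ∈ S ↔ v ∈ T)) : b ∈ S := by
  by_contra hbS
  have hsub : {v ∈ S | keyW a v ≤ keyW a b} ⊂ {v ∈ T | keyW a v ≤ keyW a b} := by
    refine Finset.ssubset_iff_of_subset (fun v hv => ?_) |>.2
      ⟨b, Finset.mem_filter.2 ⟨hb, le_rfl⟩, fun hbS' => hbS (Finset.mem_filter.1 hbS').1⟩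
    rw [Finset.mem_filter] at hv ⊢
    have hvb : keyW a v ≠ keyW a b := fun h => hbS (keyW_injective a h ▸ hv.1)
    exact ⟨(agree v (hv.2.lt_of_ne hvb)).1 hv.1, hv.2⟩
  exact (Finset.card_lt_card hsub).not_ge (h.card_filter_le _)

variable {S : ZMod n → ℕ} {Q : ∀ e : ZMod n, Fin (S e) → Fin k} {F : Type*} [Field F]
  {φ : WR k n →+* F} {z : ZMod n → F}

section Soundness

variable (hP : IsDissection P) (hQ : ∀ e, EnumIncident P e (S e) (Q e))
  (hφ : ∀ e, φ (Redge k n e (S e) (Q e)) ≠ 0)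
include hP hQ hφ

open Matrix

theorem vanishesAt_of_inferred (hM : (MWpoly k n P).map φ *ᵥ z = 0) (ht : t ≤ n)
    (hz : ∀ c < t, VanishesAt z (edgeAt a c)) (hc : Inferred (arcs P a) t c) :
    VanishesAt z (edgeAt a c) := by
  have hA := hP.isArcDiagram_arcs a
  have hlt : ∀ {d}, Inferred (arcs P a) t d → d < n := fun hd => by
    have := hA.le_of_inferred (fun _ => snd_le_of_mem_arcs) (by omega) hd
    have := hP.three_le
    omega
  induction hc with
  | of_lt hc => exact hz _ hc
  | left hox ho hx gap hio hix iho ihx =>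
    exact (hP.consec_of_left (hlt (.left hox ho hx gap hio hix)) hox ho hx gap).vanishesAt hP
      (hQ _) (hφ _) hM iho ihx
  | straddle hx ho least greatest _ hio ihx iho =>
    exact (hP.consec_of_straddle (hlt hio) hx ho least greatest).vanishesAt hP (hQ _) (hφ _) hM
      iho ihx

theorem vanishesAt_of_eq_zero_off_freshVertices (hM : (MWpoly k n P).map φ *ᵥ z = 0)
    (hlast : z (edgeAt a (n - 1)) = 0) (hy : y < n)
    (hz : ∀ c < y, edgeAt a c ∉ freshVertices P a 0 → z (edgeAt a c) = 0) (hc : c < y) :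
    VanishesAt z (edgeAt a c) := by
  induction c using Nat.strong_induction_on with
  | h c ih =>
    have hbelow : ∀ d < c, VanishesAt z (edgeAt a d) := fun d hd => ih d hd (hd.trans hc)
    by_cases hinf : Inferred (arcs P a) c c
    · exact vanishesAt_of_inferred hP hQ hφ hM (by omega) hbelow hinf
    · refine ⟨hz c hc fun hmem => hinf ?_, ?_⟩
      · rw [edgeAt_mem_freshVertices (by omega), mem_freshIn] at hmem
        exact hmem.2
      · obtain _ | c := c
        · rwa [edgeAt_zero_add_one]
        · rw [edgeAt_succ_add_one]
          exact (hbelow c c.lt_succ_self).1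

theorem eq_zero_of_le_keyW (hM : (MWpoly k n P).map φ *ᵥ z = 0)
    (hz : ∀ v ∉ freshVertices P a 0, m ≤ keyW a v → z v = 0) (hv : m ≤ keyW a v) : z v = 0 := by
  have hcn : corner a v < n := corner_lt a v
  rw [← edgeAt_corner a v, keyW_edgeAt_self hcn] at hv
  have hlast : z (edgeAt a (n - 1)) = 0 := by
    refine hz _ (fun hmem => ?_) ?_
    · have := hP.three_le
      rw [edgeAt_mem_freshVertices (by omega), mem_freshIn] at hmem
      omega
    · rw [keyW_edgeAt_self (by omega), if_neg (lt_irrefl _)]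
      split_ifs at hv <;> omega
  rw [← edgeAt_corner a v]
  obtain hc | hc : corner a v = n - 1 ∨ corner a v + 1 < n := by omega
  · rwa [hc]
  · refine (vanishesAt_of_eq_zero_off_freshVertices hP hQ hφ hM hlast hc (fun d hd hmem => ?_)
      (Nat.lt_succ_self _)).1
    refine hz _ hmem ?_
    rw [keyW_edgeAt_self (by omega)]
    rw [if_pos (by omega)] at hv ⊢
    omega

theorem eq_zero_of_supportedOn_freshVertices (hM : (MWpoly k n P).map φ *ᵥ z = 0)
    (hz : SupportedOn z (freshVertices P a 0)) : z = 0 :=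
  funext fun _ => eq_zero_of_le_keyW hP hQ hφ hM (fun v hv _ => hz v hv) (Nat.zero_le _)

theorem card_freshVertices (a : ZMod n) : (freshVertices P a 0).card = k := by
  refine (hP.le_card_freshVertices a).antisymm' (le_of_not_gt fun hlt => ?_)
  obtain ⟨z, hz₀, hz, hMz⟩ := exists_mulVec_eq_zero_of_card_lt ((MWpoly k n P).map φ)
    (T := Finset.univ) (by rwa [Finset.card_univ, Fintype.card_fin])
  exact hz₀ (eq_zero_of_supportedOn_freshVertices hP hQ hφ
    (funext fun i => hMz i (Finset.mem_univ i)) hz)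

theorem map_minorW_freshVertices_ne_zero (a : ZMod n) :
    φ (minorW k n P (freshVertices P a 0)) ≠ 0 := by
  rw [Ne, map_minorW_eq_zero_iff φ (card_freshVertices hP hQ hφ a)]
  rintro ⟨z, hz₀, hz, hMz⟩
  exact hz₀ (eq_zero_of_supportedOn_freshVertices hP hQ hφ hMz hz)

theorem mem_freshVertices_of_agree {T : Finset (ZMod n)} (hT : T.card = k)
    (hminor : φ (minorW k n P T) ≠ 0) (hb : b ∈ T)
    (agree : ∀ v, keyW a v < keyW a b → (v ∈ T ↔ v ∈ freshVertices P a 0)) :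
    b ∈ freshVertices P a 0 := by
  by_contra hbD
  -- A kernel vector supported on the fresh vertices and `b` vanishes beyond `b`, hence off `T`.
  obtain ⟨z, hz₀, hz, hMz⟩ := exists_mulVec_eq_zero_of_card_lt ((MWpoly k n P).map φ)
    (T := Finset.univ) (S := insert b (freshVertices P a 0)) (by
      rw [Finset.card_insert_of_notMem hbD, card_freshVertices hP hQ hφ a, Finset.card_univ,
        Fintype.card_fin]
      exact k.lt_succ_self)
  have hM : (MWpoly k n P).map φ *ᵥ z = 0 := funext fun i => hMz i (Finset.mem_univ i)
  refine hminor ((map_minorW_eq_zero_iff φ hT).2 ⟨z, hz₀, fun v hv => ?_, hM⟩)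
  have hvb : v ≠ b := fun h => hv (h ▸ hb)
  have hkey : keyW a v ≠ keyW a b := fun h => hvb (keyW_injective a h)
  rcases hkey.lt_or_gt with hlt | hgt
  · exact hz v (by simp only [Finset.mem_insert, hvb, false_or, ← agree v hlt, hv,
      not_false_eq_true])
  · refine eq_zero_of_le_keyW hP hQ hφ hM (m := keyW a b + 1) (fun w hw hbw => hz w ?_) hgt
    rw [Finset.mem_insert, not_or]
    exact ⟨fun h => by rw [h] at hbw; omega, hw⟩

end Soundness

theorem isBasisW_freshVertices (hP : IsDissection P) (hQ : ∀ e, EnumIncident P e (S e) (Q e))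
    (a : ZMod n) : IsBasisW k n P (freshVertices P a 0) :=
  have hR := fun e => algebraMap_Redge_ne_zero hP (hQ e)
  ⟨card_freshVertices hP hQ hR a, fun h =>
    map_minorW_freshVertices_ne_zero hP hQ hR a (by rw [h, map_zero])⟩

theorem NecklaceAt.eq_freshVertices (hP : IsDissection P)
    (hQ : ∀ e, EnumIncident P e (S e) (Q e)) {I : Finset (ZMod n)} (hI : NecklaceAt k n P a I) :
    I = freshVertices P a 0 := by
  obtain ⟨⟨hcard, hminor⟩, hleast⟩ := hI
  have hGale : GaleLEat a I (freshVertices P a 0) := hleast _ (isBasisW_freshVertices hP hQ a)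
  have hminor' := (FaithfulSMul.algebraMap_eq_zero_iff _ (WF k n)).not.2 hminor
  ext b
  induction hb : keyW a b using Nat.strong_induction_on generalizing b with
  | h m ih =>
    subst hb
    have agree := fun v hv => ih (keyW a v) hv v rfl
    exact ⟨fun hbI => mem_freshVertices_of_agree hP hQ
      (fun e => algebraMap_Redge_ne_zero hP (hQ e)) hcard hminor' hbI agree,
      fun hbD => hGale.mem_of_agree hbD agree⟩

end Necklace

section Divisibility

variable {k n s t y h c : ℕ} {P : Fin k → ZMod n × ZMod n} {e a j₁ j₂ : ZMod n}
  {i : Fin k} {q : Fin s → Fin k} {F : Type*}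

open Matrix

theorem vanishesAt_of_supportedOn_freshVertices [NeZero n] [Zero F] {z : ZMod n → F}
    (hz : SupportedOn z (freshVertices P a y)) (hcy : c ≤ y) (hc : c < n) :
    VanishesAt z (edgeAt a c) := by
  have hoff : ∀ d < n, d ≤ y ∨ d = n - 1 → z (edgeAt a d) = 0 := fun d hd hdy => by
    refine hz _ fun hmem => ?_
    rw [edgeAt_mem_freshVertices hd, mem_freshIn] at hmem
    omega
  refine ⟨hoff c hc (.inl hcy), ?_⟩
  obtain _ | c := c
  · rw [edgeAt_zero_add_one]
    exact hoff _ (by omega) (.inr rfl)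
  · rw [edgeAt_succ_add_one]
    exact hoff c (by omega) (.inl (by omega))

theorem exists_redundant_row [NeZero n] [CommRing F] [IsDomain F] (hP : IsDissection P)
    (hq : EnumIncident P e s q) {φ : WR k n →+* F} (hs : s ≠ 0) (ht : t ≤ s)
    (hgap : φ (gapFactor e q t) = 0)
    (hne : t ≠ 0 → φ (spokeRight e q (t + 1)) ≠ 0) :
    ∃ i, (Joins P i e (spokeEnd P e q t) ∨ Joins P i e (spokeEnd P e q (t + 1))) ∧
      ∀ z : ZMod n → F, VanishesAt z (spokeEnd P e q t) → VanishesAt z (spokeEnd P e q (t + 1)) →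
        (∀ i' ≠ i, ((MWpoly k n P).map φ *ᵥ z) i' = 0) → (MWpoly k n P).map φ *ᵥ z = 0 := by
  have hjoin : ∀ {m} (hm : m < s), Joins P (q ⟨m, hm⟩) e (spokeEnd P e q (m + 1)) := fun hm => by
    rw [spokeEnd_succ_of_lt hm]
    exact joins_otherEnd (hq.2.1 _)
  have hfull : ∀ {i : Fin k} {z : ZMod n → F}, ((MWpoly k n P).map φ *ᵥ z) i = 0 →
      (∀ i' ≠ i, ((MWpoly k n P).map φ *ᵥ z) i' = 0) → (MWpoly k n P).map φ *ᵥ z = 0 :=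
    fun hi hrest => funext fun i' => or_iff_not_imp_left.2 (hrest i') |>.elim (· ▸ hi) id
  obtain _ | m := t
  · have hs := Nat.pos_of_ne_zero hs
    refine ⟨q ⟨0, hs⟩, .inr (hjoin hs), fun z hz hz' hrest => hfull ?_ hrest⟩
    rw [mulVec_eq_zero_iff_spokeRel hP hq hs hz']
    exact spokeRel_one_of_gapFactor_eq_zero hgap (spokeRel_zero hz)
  · refine ⟨q ⟨m, ht⟩, .inl (hjoin ht), fun z hz hz' hrest => hfull ?_ hrest⟩
    rw [mulVec_eq_zero_iff_spokeRel hP hq ht hz]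
    refine spokeRel_of_gapFactor_eq_zero hgap ?_ (hne m.succ_ne_zero)
    obtain hlt | rfl := ht.lt_or_eq
    · exact (mulVec_eq_zero_iff_spokeRel hP hq hlt hz').1
        (hrest _ (hq.1.ne (by simp)))
    · exact spokeRel_last hz'

section Cell

variable [NeZero n] (hP : IsDissection P) (hyh : ArcAdj (arcs P a) y h)
  (h0h : ArcAdj (arcs P a) 0 h) (gap : ∀ t, 0 < t → t < y → ¬ ArcAdj (arcs P a) t h)
include hP hyh h0h gap

theorem card_filter_arc_mem_fan_le (hy : 0 < y) (hhn : h < n) :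
    ({i | arc P a i ∈ fan (arcs P a) 0 y (n - 1)} : Finset (Fin k)).card ≤
      (freshVertices P a y).card := by
  have hA := hP.isArcDiagram_arcs a
  have hylth := hA.lt_of_adj hyh
  have hroot : (0, n - 1) ∈ fan (arcs P a) 0 y (n - 1) := by
    refine Finset.mem_filter.2 ⟨Finset.mem_insert_self _ _, le_rfl, .inl ⟨rfl, ?_⟩⟩
    omega
  have hlt := hP.card_filter_arc_mem_lt (a := a) hroot
  have hfan := hA.card_fan_le_freshIn_of_cell hy hyh h0h gap (by omega : h ≤ n - 1)
  have hfresh := card_freshIn_le_card_freshVertices P a y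
  omega

theorem mulVec_eq_zero_of_arc_notMem_fan [CommRing F] (φ : WR k n →+* F) {z : ZMod n → F}
    (hz : SupportedOn z (freshVertices P a y)) (hi : arc P a i ∉ fan (arcs P a) 0 y (n - 1)) :
    ((MWpoly k n P).map φ *ᵥ z) i = 0 := by
  obtain ⟨c, d, hcd, hdn, hj⟩ := hP.exists_arc a i
  rw [(arc_eq_iff_joins hcd hdn).2 hj] at hi
  have hmem : (c, d) ∈ arcs P a := (mem_arcs_iff hcd hdn).2 (.inr ⟨i, hj⟩)
  have hdy : d ≤ y := (hP.isArcDiagram_arcs a).snd_le_of_notMem_fan hyh h0h gap hmem c.zero_le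
    (by omega) hi
  obtain ⟨hc₀, hc₁⟩ := vanishesAt_of_supportedOn_freshVertices hz (by omega : c ≤ y) (by omega)
  obtain ⟨hd₀, hd₁⟩ := vanishesAt_of_supportedOn_freshVertices hz hdy hdn
  simp only [mulVec_MWpoly_apply hP φ z hj, hc₀, hc₁, hd₀, hd₁, mul_zero, add_zero]

theorem exists_supportedOn_mulVec_eq_zero_off_row [Field F] (φ : WR k n →+* F) (hy : 0 < y)
    (hhn : h < n) (hi : arc P a i ∈ fan (arcs P a) 0 y (n - 1)) :
    ∃ z : ZMod n → F, z ≠ 0 ∧ SupportedOn z (freshVertices P a y) ∧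
      ∀ i' ≠ i, ((MWpoly k n P).map φ *ᵥ z) i' = 0 := by
  set T : Finset (Fin k) := {i | arc P a i ∈ fan (arcs P a) 0 y (n - 1)}
  have hiT : i ∈ T := Finset.mem_filter.2 ⟨Finset.mem_univ i, hi⟩
  obtain ⟨z, hz₀, hz, hMz⟩ := exists_mulVec_eq_zero_of_card_lt ((MWpoly k n P).map φ)
    ((Finset.card_erase_lt_of_mem hiT).trans_le
      (card_filter_arc_mem_fan_le hP hyh h0h gap hy hhn))
  refine ⟨z, hz₀, hz, fun i' hi' => ?_⟩
  by_cases hi'T : arc P a i' ∈ fan (arcs P a) 0 y (n - 1)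
  · exact hMz i' (Finset.mem_erase.2 ⟨hi', Finset.mem_filter.2 ⟨Finset.mem_univ i', hi'T⟩⟩)
  · exact mulVec_eq_zero_of_arc_notMem_fan hP hyh h0h gap φ hz hi'T

end Cell

theorem Consec.exists_mulVec_eq_zero_off_row [NeZero n] [Field F] (hP : IsDissection P)
    (φ : WR k n →+* F) (hc : Consec P e j₁ j₂) (hi : Joins P i e j₁ ∨ Joins P i e j₂) :
    ∃ z : ZMod n → F, z ≠ 0 ∧ SupportedOn z (freshVertices P (j₁ + 2) 0) ∧ VanishesAt z j₁ ∧
      VanishesAt z j₂ ∧ ∀ i' ≠ i, ((MWpoly k n P).map φ *ᵥ z) i' = 0 := by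
  obtain ⟨y, h, hy, hyh, hhn, hj₂, he, hadj, hadj₀, gap⟩ := hc.exists_cell hP
  have hj₁ := edgeAt_zero j₁
  rw [← hj₁, ← hj₂, ← he] at hi
  set a := j₁ + 2
  have hfan : arc P a i ∈ fan (arcs P a) 0 y (n - 1) := by
    have hmem : arc P a i ∈ arcs P a :=
      Finset.mem_insert_of_mem (Finset.mem_image_of_mem _ (Finset.mem_univ i))
    have harc : arc P a i = (0, h) ∨ arc P a i = (y, h) := hi.imp
      (fun hi => (arc_eq_iff_joins (hy.trans hyh) hhn).2 hi.symm)
      (fun hi => (arc_eq_iff_joins hyh hhn).2 hi.symm)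
    have hh : h ≤ n - 1 := by omega
    refine Finset.mem_filter.2 ⟨hmem, ?_⟩
    rcases harc with harc | harc <;> rw [harc]
    exacts [⟨hh, .inl ⟨rfl, hyh⟩⟩, ⟨hh, .inr le_rfl⟩]
  obtain ⟨z, hz₀, hz, hMz⟩ :=
    exists_supportedOn_mulVec_eq_zero_off_row hP hadj hadj₀ gap φ hy hhn hfan
  refine ⟨z, hz₀, fun v hv => hz v fun hmem => hv (freshVertices_subset P a y hmem), ?_, ?_, hMz⟩
  · exact hj₁ ▸ vanishesAt_of_supportedOn_freshVertices hz y.zero_le (by omega)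
  · exact hj₂ ▸ vanishesAt_of_supportedOn_freshVertices hz le_rfl (by omega)

theorem map_minorW_freshVertices_eq_zero [NeZero n] [Field F] (hP : IsDissection P)
    (hq : EnumIncident P e s q) {φ : WR k n →+* F} (hs : s ≠ 0) (ht : t ≤ s)
    (hgap : φ (gapFactor e q t) = 0) (hne : t ≠ 0 → φ (spokeRight e q (t + 1)) ≠ 0)
    (hcard : (freshVertices P (spokeEnd P e q t + 2) 0).card = k) :
    φ (minorW k n P (freshVertices P (spokeEnd P e q t + 2) 0)) = 0 := by
  obtain ⟨i, hi, redundant⟩ := exists_redundant_row hP hq hs ht hgap hne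
  obtain ⟨z, hz₀, hz, hz₁, hz₂, hMz⟩ :=
    (consec_spokeEnd hP hq ht).exists_mulVec_eq_zero_off_row hP φ hi
  exact (map_minorW_eq_zero_iff φ hcard).2 ⟨z, hz₀, hz, redundant z hz₁ hz₂ hMz⟩

theorem gapFactor_dvd_minorW [NeZero n] (hP : IsDissection P) {S : ZMod n → ℕ}
    {Q : ∀ e : ZMod n, Fin (S e) → Fin k} (hQ : ∀ e, EnumIncident P e (S e) (Q e))
    (hs : S e ≠ 0) (ht : t ≤ S e) :
    gapFactor e (Q e) t ∣ minorW k n P (freshVertices P (spokeEnd P e (Q e) t + 2) 0) := by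
  have hn := hP.one_lt
  have hprime : Prime (gapFactor e (Q e) t) := (irreducible_gapFactor hn (hQ e).1 hs ht).prime
  let p : Ideal (WR k n) := Ideal.span {gapFactor e (Q e) t}
  have : p.IsPrime := (Ideal.span_singleton_prime hprime.ne_zero).2 hprime
  let φ := algebraMap (WR k n) p.ResidueField
  have hφ : ∀ f, φ f = 0 ↔ gapFactor e (Q e) t ∣ f := fun f => by
    rw [Ideal.algebraMap_residueField_eq_zero, Ideal.mem_span_singleton]
  rw [← hφ]
  refine map_minorW_freshVertices_eq_zero hP (hQ e) hs ht ((hφ _).2 dvd_rfl) (fun ht₀ => ?_)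
    (isBasisW_freshVertices hP hQ _).1
  obtain ⟨m, rfl⟩ := Nat.exists_eq_succ_of_ne_zero ht₀
  exact (hφ _).not.2 (gapFactor_succ_not_dvd_spokeRight hn e (Q e) m)

end Divisibility

theorem prod_Redge_mem_of_prod_minorW_mem {k n : ℕ} [NeZero n] {P : Fin k → ZMod n × ZMod n}
    (hP : IsDissection P) {s : ZMod n → ℕ} {q : ∀ e : ZMod n, Fin (s e) → Fin k}
    (hq : ∀ e, EnumIncident P e (s e) (q e)) {p : Ideal (WR k n)} [p.IsPrime]
    (hp : ∏ a, minorW k n P (freshVertices P a 0) ∈ p) :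
    ∏ e, Redge k n e (s e) (q e) ∈ p := by
  obtain ⟨a, -, ha⟩ := (Ideal.IsPrime.prod_mem_iff).1 hp
  contrapose! ha
  rw [Ideal.IsPrime.prod_mem_iff] at ha
  rw [← Ideal.algebraMap_residueField_eq_zero]
  exact map_minorW_freshVertices_ne_zero hP hq (φ := algebraMap (WR k n) p.ResidueField)
    (fun e he => ha ⟨e, Finset.mem_univ e, Ideal.algebraMap_residueField_eq_zero.1 he⟩) a

theorem prod_Redge_dvd_of_prod_minorW_dvd_pow {k n : ℕ} [NeZero n]
    {P : Fin k → ZMod n × ZMod n} (hP : IsDissection P) {s : ZMod n → ℕ}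
    {q : ∀ e : ZMod n, Fin (s e) → Fin k} (hq : ∀ e, EnumIncident P e (s e) (q e))
    {g : WR k n} {m : ℕ} (hg : ∏ a, minorW k n P (freshVertices P a 0) ∣ g ^ m) :
    ∏ e, Redge k n e (s e) (q e) ∣ g := by
  have hn := hP.one_lt
  refine prod_Redge_dvd hP hq fun e hs t ht => ?_
  have hprime : Prime (gapFactor e (q e) t) := (irreducible_gapFactor hn (hq e).1 hs ht).prime
  have hdvd : gapFactor e (q e) t ∣ ∏ a, minorW k n P (freshVertices P a 0) :=
    (gapFactor_dvd_minorW hP hq hs ht).trans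
      (Finset.dvd_prod_of_mem (fun a => minorW k n P (freshVertices P a 0)) (Finset.mem_univ _))
  exact hprime.dvd_of_dvd_pow (hdvd.trans hg)

theorem statement8_general {k n : ℕ} [NeZero n] {P : Fin k → ZMod n × ZMod n}
    (hP : IsDissection P) {s : ZMod n → ℕ} {q : ∀ e : ZMod n, Fin (s e) → Fin k}
    (hq : ∀ e, EnumIncident P e (s e) (q e)) {I : ZMod n → Finset (ZMod n)}
    (hI : ∀ a, NecklaceAt k n P a (I a)) :
    Ideal.span {∏ e, Redge k n e (s e) (q e)} =
      (Ideal.span {∏ a, minorW k n P (I a)}).radical := by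
  obtain rfl : I = fun a => freshVertices P a 0 := funext fun a => (hI a).eq_freshVertices hP hq
  refine le_antisymm ?_ fun g ⟨m, hm⟩ => ?_
  · rw [Ideal.span_singleton_le_iff_mem, Ideal.radical_eq_sInf, Ideal.mem_sInf]
    rintro p ⟨hle, hprime⟩
    exact prod_Redge_mem_of_prod_minorW_mem hP hq ((Ideal.span_singleton_le_iff_mem p).1 hle)
  · rw [Ideal.mem_span_singleton] at hm ⊢
    exact prod_Redge_dvd_of_prod_minorW_dvd_pow hP hq hm

/-- for an admissible Wilson loop diagram, the principal ideal of `ℝ[x]`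
generated by `R(V(𝒫)) = ∏_e R_e` equals the radical of the principal ideal generated
by the product `∏_a Δ_{I_a}(x)` of the Grassmann necklace minors. -/
theorem statement8 (k n : ℕ) [NeZero n] (P : Fin k → ZMod n × ZMod n)
    (hW : Admissible n (Multiset.map P Finset.univ.val))
    (s : ZMod n → ℕ) (q : ∀ e : ZMod n, Fin (s e) → Fin k)
    (hq : ∀ e : ZMod n, EnumIncident P e (s e) (q e))
    (I : ZMod n → Finset (ZMod n)) (hI : ∀ a : ZMod n, NecklaceAt k n P a (I a)) :
    Ideal.span {∏ e : ZMod n, Redge k n e (s e) (q e)} =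
      (Ideal.span {∏ a : ZMod n, minorW k n P (I a)}).radical :=
  statement8_general hW.isDissection hq hI
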